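/- Let X be a real-valued random variable with unbounded distribution F and Y a nonnegative random variable with distribution G, neither degenerate at zero, and let H be the distribution of XY. Suppose (X,Y) follows an FGM distribution with parameter |θ|<1 and satisfies Assumption 2 (Ḡ(bx)=o(H̄(x)) as x→∞ for every constant b>0). If F belongs to the class S(γ) for some γ≥0, then H belongs to S(γ/β_G), where β_G=sup{y:G(y)<1} and γ/β_G is understood as 0 when β_G=∞. -/

import Mathlib

open MeasureTheory ProbabilityTheory Filter Set Asymptotics

noncomputable section

/-- The tail (survival) function `x ↦ P(Z > x)` of a random variable `Z`. -/
def rvTail {Ω : Type*} [MeasureSpace Ω] (Z : Ω → ℝ) (x : ℝ) : ℝ :=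
  (ℙ {ω | x < Z ω}).toReal

/-- The cumulative distribution function `x ↦ P(Z ≤ x)` of a random variable `Z`. -/
def rvCdf {Ω : Type*} [MeasureSpace Ω] (Z : Ω → ℝ) (x : ℝ) : ℝ :=
  (ℙ {ω | Z ω ≤ x}).toReal

/-- The left limit of the cdf, `G(y-) = P(Z < y)`. -/
def rvCdfLeft {Ω : Type*} [MeasureSpace Ω] (Z : Ω → ℝ) (y : ℝ) : ℝ :=
  (ℙ {ω | Z ω < y}).toReal

/-- The distribution of `Z` is unbounded (above): its tail is positive for every `x > 0`. -/
def UnboundedDist {Ω : Type*} [MeasureSpace Ω] (Z : Ω → ℝ) : Prop :=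
  ∀ x > 0, 0 < rvTail Z x

/-- The support `D_Z = {y : P(Z ∈ (y - δ, y + δ)) > 0 for all δ > 0}` of the
distribution of `Z`. -/
def distSupport {Ω : Type*} [MeasureSpace Ω] (Z : Ω → ℝ) : Set ℝ :=
  {y | ∀ δ > 0, 0 < ℙ {ω | Z ω ∈ Ioo (y - δ) (y + δ)}}

/-- The distribution of `Z` belongs to the class `L(γ)`: it is unbounded above and
`P(Z > x - t) ~ e^{γ t} P(Z > x)` as `x → ∞`, for every `t > 0`. -/
def MemLGamma {Ω : Type*} [MeasureSpace Ω] (Z : Ω → ℝ) (γ : ℝ) : Prop :=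
  UnboundedDist Z ∧
    ∀ t > 0, (fun x => rvTail Z (x - t)) ~[atTop] (fun x => Real.exp (γ * t) * rvTail Z x)

/-- The tail of the two-fold convolution of the distribution of `Z` with itself. -/
def convSqTail {Ω : Type*} [MeasureSpace Ω] (Z : Ω → ℝ) (x : ℝ) : ℝ :=
  (((Measure.map Z ℙ).conv (Measure.map Z ℙ)) (Ioi x)).toReal

/-- The distribution of `Z` belongs to the class `S(γ)`: it belongs to `L(γ)`, the
exponential moment `c = ∫ e^{γ y} dV(y)` is finite, and the tail of the two-fold
convolution satisfies `V̄*²(x) ~ 2 c V̄(x)` as `x → ∞`. -/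
def MemSGamma {Ω : Type*} [MeasureSpace Ω] (Z : Ω → ℝ) (γ : ℝ) : Prop :=
  MemLGamma Z γ ∧
    Integrable (fun y => Real.exp (γ * y)) (Measure.map Z ℙ) ∧
    (fun x => convSqTail Z x) ~[atTop]
      (fun x => 2 * (∫ y, Real.exp (γ * y) ∂(Measure.map Z ℙ)) * rvTail Z x)

open Classical in
/-- `γ / β_G`, where `β_G = sup {y : G(y) < 1}` is the right endpoint of the distribution
of `Z`, with the convention that `γ / β_G = 0` when `β_G = ∞`.
(Note that `G(y) < 1 ↔ P(Z > y) > 0`.) -/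
def gammaOverBeta {Ω : Type*} [MeasureSpace Ω] (Z : Ω → ℝ) (γ : ℝ) : ℝ :=
  if BddAbove {y : ℝ | 0 < rvTail Z y} then γ / sSup {y : ℝ | 0 < rvTail Z y} else 0

/-- Assumption 2: `Ḡ(b x) = o(H̄(x))` as `x → ∞` for every constant `b > 0`, where `G` is
the distribution of `Y` and `H` is the distribution of the product `X Y`. -/
def Assumption2 {Ω : Type*} [MeasureSpace Ω] (X Y : Ω → ℝ) : Prop :=
  ∀ b > 0, (fun x => rvTail Y (b * x)) =o[atTop] fun x => rvTail (fun ω => X ω * Y ω) x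

/-- Assumption 1: `K x y` is the conditional probability `P(X > x | Y = y)`, namely for
`y` in the support of `Y` it is the limit of `P(X > x | Y ∈ (y - δ, y + δ])` as `δ → 0+`,
and for `y` outside the support it is the unconditional probability `P(X > x)` (and then
`h y = 1`); `h : [0,∞) → (0,∞)` is a measurable function such that
`P(X > x | Y = y) ~ h(y) P(X > x)` as `x → ∞`, uniformly for `y ≥ 0`. -/
def Assumption1 {Ω : Type*} [MeasureSpace Ω] (X Y : Ω → ℝ) (h : ℝ → ℝ) (K : ℝ → ℝ → ℝ) :
    Prop :=
  Measurable h ∧ (∀ y, 0 ≤ y → 0 < h y) ∧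
    (∀ y, y ∉ distSupport Y → h y = 1 ∧ ∀ x, K x y = rvTail X x) ∧
    (∀ y ∈ distSupport Y, ∀ x : ℝ,
      Tendsto
        (fun δ : ℝ => (ℙ {ω | x < X ω ∧ Y ω ∈ Ioc (y - δ) (y + δ)}).toReal /
          (ℙ {ω | Y ω ∈ Ioc (y - δ) (y + δ)}).toReal)
        (nhdsWithin 0 (Ioi 0)) (nhds (K x y))) ∧
    ∀ ε > 0, ∀ᶠ x in atTop, ∀ y, 0 ≤ y → |K x y / (h y * rvTail X x) - 1| < ε

/-- `(X, Y)` follows a Farlie–Gumbel–Morgenstern (FGM) distribution with parameter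
`θ ∈ [-1, 1]`: `P(X > x, Y > y) = F̄(x) Ḡ(y) (1 + θ F(x) G(y))` for all `x` in the
support of `X` and `y` in the support of `Y`. -/
def FGM {Ω : Type*} [MeasureSpace Ω] (X Y : Ω → ℝ) (θ : ℝ) : Prop :=
  θ ∈ Icc (-1 : ℝ) 1 ∧
    ∀ x ∈ distSupport X, ∀ y ∈ distSupport Y,
      (ℙ {ω | x < X ω ∧ y < Y ω}).toReal =
        rvTail X x * rvTail Y y * (1 + θ * rvCdf X x * rvCdf Y y)

/-- `(X, Y)` follows a bivariate Sarmanov distribution with kernels `φ₁, φ₂` and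
parameter `θ`: the joint law has density `1 + θ φ₁(x) φ₂(y)` with respect to the product
of the marginal laws, where `φ₁, φ₂` are measurable, `E φ₁(X) = E φ₂(Y) = 0` and
`1 + θ φ₁(x) φ₂(y) ≥ 0`. -/
def Sarmanov {Ω : Type*} [MeasureSpace Ω] (X Y : Ω → ℝ) (φ₁ φ₂ : ℝ → ℝ) (θ : ℝ) : Prop :=
  Measurable φ₁ ∧ Measurable φ₂ ∧
    Integrable (fun ω => φ₁ (X ω)) ℙ ∧ Integrable (fun ω => φ₂ (Y ω)) ℙ ∧
    (∫ ω, φ₁ (X ω)) = 0 ∧ (∫ ω, φ₂ (Y ω)) = 0 ∧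
    (∀ x y : ℝ, 0 ≤ y → 0 ≤ 1 + θ * φ₁ x * φ₂ y) ∧
    Measure.map (fun ω => (X ω, Y ω)) ℙ =
      ((Measure.map X ℙ).prod (Measure.map Y ℙ)).withDensity
        (fun p => ENNReal.ofReal (1 + θ * φ₁ p.1 * φ₂ p.2))

/-- The condition `ψ(y) = lim_{δ → 0+} (∫_{y-δ}^{y+δ} φ₂(v) G(dv)) / (G(y+δ) - G(y-δ))`
for all `y` in the support of `Y`. -/
def SarmanovPsi {Ω : Type*} [MeasureSpace Ω] (Y : Ω → ℝ) (φ₂ ψ : ℝ → ℝ) : Prop :=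
  ∀ y ∈ distSupport Y,
    Tendsto
      (fun δ : ℝ => (∫ v in Ioc (y - δ) (y + δ), φ₂ v ∂(Measure.map Y ℙ)) /
        (rvCdf Y (y + δ) - rvCdf Y (y - δ)))
      (nhdsWithin 0 (Ioi 0)) (nhds (ψ y))



section fgmdensity

lemma real_Ioi_meas (F : Measure ℝ) [IsProbabilityMeasure F] : Measurable (fun v => F.real (Ioi v)) :=
  Antitone.measurable (fun _ _ h => measureReal_mono (Ioi_subset_Ioi h))

lemma real_Ici_meas (F : Measure ℝ) [IsProbabilityMeasure F] : Measurable (fun v => F.real (Ici v)) :=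
  Antitone.measurable (fun _ _ h => measureReal_mono (Ici_subset_Ici.2 h))

/-- mid-tail function -/
def midTail (F : Measure ℝ) (v : ℝ) : ℝ := F.real (Ioi v) + F.real (Ici v)

lemma midTail_meas (F : Measure ℝ) [IsProbabilityMeasure F] : Measurable (midTail F) :=
  (real_Ioi_meas F).add (real_Ici_meas F)

lemma midTail_nonneg (F : Measure ℝ) (v : ℝ) : 0 ≤ midTail F v := by
  unfold midTail; positivity

lemma midTail_le (F : Measure ℝ) [IsProbabilityMeasure F] (v : ℝ) : midTail F v ≤ 2 := by
  unfold midTail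
  have h1 : F.real (Ioi v) ≤ 1 := measureReal_le_one
  have h2 : F.real (Ici v) ≤ 1 := measureReal_le_one
  linarith

lemma integral_real_section (F G : Measure ℝ) [IsProbabilityMeasure F] [IsProbabilityMeasure G]
    (S : Set (ℝ × ℝ)) (hS : MeasurableSet S) :
    (F.prod G).real S = ∫ v, G.real (Prod.mk v ⁻¹' S) ∂F := by
  rw [measureReal_def, Measure.prod_apply hS, ← integral_toReal]
  · rfl
  · exact (measurable_measure_prodMk_left hS).aemeasurable
  · exact Eventually.of_forall (fun x => measure_lt_top _ _)

lemma setIntegral_midTail (F : Measure ℝ) [IsProbabilityMeasure F] (x : ℝ) :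
    ∫ v in Ioi x, midTail F v ∂F = F.real (Ioi x) ^ 2 := by
  have hA : MeasurableSet {p : ℝ × ℝ | x < p.1 ∧ p.1 < p.2} :=
    (measurableSet_lt measurable_const measurable_fst).inter
      (measurableSet_lt measurable_fst measurable_snd)
  have hB : MeasurableSet {p : ℝ × ℝ | x < p.1 ∧ p.1 ≤ p.2} :=
    (measurableSet_lt measurable_const measurable_fst).inter
      (measurableSet_le measurable_fst measurable_snd)
  have hA' : MeasurableSet {p : ℝ × ℝ | x < p.2 ∧ p.2 < p.1} :=
    (measurableSet_lt measurable_const measurable_snd).inter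
      (measurableSet_lt measurable_snd measurable_fst)
  have e1 : ∫ v in Ioi x, F.real (Ioi v) ∂F = (F.prod F).real {p : ℝ × ℝ | x < p.1 ∧ p.1 < p.2} := by
    rw [integral_real_section F F _ hA, ← integral_indicator measurableSet_Ioi]
    refine integral_congr_ae (Eventually.of_forall fun v => ?_)
    by_cases hv : x < v
    · simp [indicator, hv, preimage, Ioi]
    · simp [indicator, hv, preimage]
  have e2 : ∫ v in Ioi x, F.real (Ici v) ∂F = (F.prod F).real {p : ℝ × ℝ | x < p.1 ∧ p.1 ≤ p.2} := by
    rw [integral_real_section F F _ hB, ← integral_indicator measurableSet_Ioi]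
    refine integral_congr_ae (Eventually.of_forall fun v => ?_)
    by_cases hv : x < v
    · simp [indicator, hv, preimage, Ici]
    · simp [indicator, hv, preimage]
  have e3 : (F.prod F).real {p : ℝ × ℝ | x < p.1 ∧ p.1 < p.2} =
      (F.prod F).real {p : ℝ × ℝ | x < p.2 ∧ p.2 < p.1} := by
    conv_lhs => rw [← Measure.prod_swap (μ := F) (ν := F)]
    rw [map_measureReal_apply measurable_swap hA]
    rfl
  have i1 : ∀ f : ℝ → ℝ, Measurable f → (∀ v, |f v| ≤ 1) → IntegrableOn f (Ioi x) F := by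
    intro f hf hb
    exact (Integrable.of_bound (C := 1) hf.aestronglyMeasurable
      (Eventually.of_forall fun v => by simpa using hb v)).integrableOn
  unfold midTail
  rw [integral_add, e1, e2, e3, ← measureReal_union _ hB]
  · have : {p : ℝ × ℝ | x < p.2 ∧ p.2 < p.1} ∪ {p : ℝ × ℝ | x < p.1 ∧ p.1 ≤ p.2} = Ioi x ×ˢ Ioi x := by
      ext ⟨a, b⟩
      simp only [mem_union, mem_ofPred_eq, mem_prod, mem_Ioi]
      constructor
      · rintro (⟨h1, h2⟩ | ⟨h1, h2⟩) <;> constructor <;> linarith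
      · rintro ⟨h1, h2⟩
        rcases lt_or_ge b a with h | h
        · exact Or.inl ⟨h2, h⟩
        · exact Or.inr ⟨h1, h⟩
    rw [this, measureReal_prod_prod, sq]
  · rw [Set.disjoint_left]
    rintro ⟨a, b⟩ ⟨_, h2⟩ ⟨_, h3⟩
    simp at h2 h3; linarith
  · exact i1 _ (real_Ioi_meas F) (fun v => by rw [abs_of_nonneg measureReal_nonneg]; exact measureReal_le_one)
  · exact i1 _ (real_Ici_meas F) (fun v => by rw [abs_of_nonneg measureReal_nonneg]; exact measureReal_le_one)

/-- FGM density -/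
def fgmDens (F G : Measure ℝ) (θ : ℝ) (p : ℝ × ℝ) : ℝ :=
  1 + θ * ((1 - midTail F p.1) * (1 - midTail G p.2))

lemma fgmDens_meas (F G : Measure ℝ) [IsProbabilityMeasure F] [IsProbabilityMeasure G] (θ : ℝ) :
    Measurable (fgmDens F G θ) := by
  have := midTail_meas F
  have := midTail_meas G
  unfold fgmDens
  fun_prop

lemma abs_one_sub_midTail (F : Measure ℝ) [IsProbabilityMeasure F] (v : ℝ) : |1 - midTail F v| ≤ 1 := by
  rw [abs_le]; constructor <;> linarith [midTail_nonneg F v, midTail_le F v]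

lemma fgm_prod_abs (F G : Measure ℝ) [IsProbabilityMeasure F] [IsProbabilityMeasure G] (θ : ℝ) (p : ℝ × ℝ) :
    |θ * ((1 - midTail F p.1) * (1 - midTail G p.2))| ≤ |θ| := by
  rw [abs_mul, abs_mul]
  have h1 := abs_one_sub_midTail F p.1
  have h2 := abs_one_sub_midTail G p.2
  have : |1 - midTail F p.1| * |1 - midTail G p.2| ≤ 1 := mul_le_one₀ h1 (abs_nonneg _) h2
  nlinarith [abs_nonneg θ]

lemma fgmDens_ge (F G : Measure ℝ) [IsProbabilityMeasure F] [IsProbabilityMeasure G] (θ : ℝ) (p : ℝ × ℝ) :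
    1 - |θ| ≤ fgmDens F G θ p := by
  have := (abs_le.1 (fgm_prod_abs F G θ p)).1
  unfold fgmDens; linarith

lemma fgmDens_le (F G : Measure ℝ) [IsProbabilityMeasure F] [IsProbabilityMeasure G] (θ : ℝ) (p : ℝ × ℝ) :
    fgmDens F G θ p ≤ 1 + |θ| := by
  have := (abs_le.1 (fgm_prod_abs F G θ p)).2
  unfold fgmDens; linarith

lemma setIntegral_one_sub_midTail (F : Measure ℝ) [IsProbabilityMeasure F] (x : ℝ) :
    ∫ v in Ioi x, (1 - midTail F v) ∂F = F.real (Ioi x) - F.real (Ioi x) ^ 2 := by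
  rw [integral_sub, setIntegral_midTail]
  · simp
  · exact integrable_const _
  · exact (Integrable.of_bound (C := 2) (midTail_meas F).aestronglyMeasurable
      (Eventually.of_forall fun v => by
        rw [Real.norm_eq_abs, abs_of_nonneg (midTail_nonneg F v)]; exact midTail_le F v)).integrableOn

lemma joint_eq_density (F G : Measure ℝ) [IsProbabilityMeasure F] [IsProbabilityMeasure G]
    (J : Measure (ℝ × ℝ)) [IsProbabilityMeasure J] (θ : ℝ) (hθ : |θ| < 1)
    (hJ : ∀ x y, J.real (Ioi x ×ˢ Ioi y) = F.real (Ioi x) * G.real (Ioi y) *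
      (1 + θ * (1 - F.real (Ioi x)) * (1 - G.real (Ioi y)))) :
    J = (F.prod G).withDensity (fun p => ENNReal.ofReal (fgmDens F G θ p)) := by
  have hdi : Integrable (fgmDens F G θ) (F.prod G) :=
    Integrable.of_bound (C := 2) (fgmDens_meas F G θ).aestronglyMeasurable
      (Eventually.of_forall fun p => by
        have h1 := fgmDens_ge F G θ p
        have h2 := fgmDens_le F G θ p
        rw [Real.norm_eq_abs, abs_le]; constructor <;> linarith)
  have hrect : ∀ x y, J (Ioi x ×ˢ Ioi y) =
      (F.prod G).withDensity (fun p => ENNReal.ofReal (fgmDens F G θ p)) (Ioi x ×ˢ Ioi y) := by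
    intro x y
    rw [withDensity_apply _ (measurableSet_Ioi.prod measurableSet_Ioi),
      ← ofReal_integral_eq_lintegral_ofReal hdi.integrableOn
        (Eventually.of_forall fun p => by
          have := fgmDens_ge F G θ p
          simp only [Pi.zero_apply]; linarith)]
    have : ∫ p in Ioi x ×ˢ Ioi y, fgmDens F G θ p ∂(F.prod G) = J.real (Ioi x ×ˢ Ioi y) := by
      unfold fgmDens
      rw [integral_add (integrable_const _), integral_const_mul, setIntegral_prod_mul (fun v => 1 - midTail F v) (fun v => 1 - midTail G v),
        setIntegral_one_sub_midTail, setIntegral_one_sub_midTail, hJ]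
      · simp only [integral_const, smul_eq_mul, mul_one, measureReal_restrict_apply_univ, measureReal_prod_prod]
        ring
      · have := (hdi.sub (integrable_const (1:ℝ))).integrableOn (s := Ioi x ×ˢ Ioi y)
        refine this.congr (Eventually.of_forall fun p => ?_)
        simp [fgmDens]
    rw [this]
    simp [measureReal_def]
  have hC : (MeasurableSpace.generateFrom (range (Ioi : ℝ → Set ℝ))) = Real.measurableSpace := by
    rw [← borel_eq_generateFrom_Ioi ℝ]; exact (BorelSpace.measurable_eq).symm
  have hcs : IsCountablySpanning (range (Ioi : ℝ → Set ℝ)) := by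
    refine ⟨fun n : ℕ => Ioi (-(n:ℝ)), fun n => ⟨_, rfl⟩, ?_⟩
    rw [eq_univ_iff_forall]
    intro z
    obtain ⟨n, hn⟩ := exists_nat_gt (-z)
    exact mem_iUnion.2 ⟨n, by simp only [mem_Ioi]; linarith⟩
  have hpi : IsPiSystem (range (Ioi : ℝ → Set ℝ)) := by
    rintro _ ⟨a, rfl⟩ _ ⟨b, rfl⟩ _
    exact ⟨a ⊔ b, by rw [Ioi_inter_Ioi]⟩
  refine Measure.ext_of_generateFrom_of_iUnion _ (fun n : ℕ => Ioi (-(n:ℝ)) ×ˢ Ioi (-(n:ℝ)))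
    (generateFrom_eq_prod hC hC hcs hcs).symm (hpi.prod hpi) ?_ ?_ ?_ ?_
  · rw [eq_univ_iff_forall]
    rintro ⟨z, w⟩
    obtain ⟨n, hn⟩ := exists_nat_gt (max (-z) (-w))
    refine mem_iUnion.2 ⟨n, ?_⟩
    have := le_max_left (-z) (-w)
    have := le_max_right (-z) (-w)
    constructor <;> simp only [mem_Ioi] <;> linarith
  · intro n; exact ⟨_, ⟨_, rfl⟩, _, ⟨_, rfl⟩, rfl⟩
  · intro n; exact measure_ne_top _ _
  · rintro _ ⟨_, ⟨x, rfl⟩, _, ⟨y, rfl⟩, rfl⟩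
    exact hrect x y

end fgmdensity


section fgmext
variable {Ω : Type*} [MeasureSpace Ω] [IsProbabilityMeasure (ℙ : Measure Ω)]

lemma distSupport_eq (Z : Ω → ℝ) (hZ : Measurable Z) :
    distSupport Z = (Measure.map Z ℙ).support := by
  ext y
  rw [(nhds_basis_Ioo_pos y).mem_measureSupport]
  unfold distSupport
  refine forall₂_congr fun δ _ => ?_
  rw [Measure.map_apply hZ measurableSet_Ioo]
  rfl

lemma exists_support_le (Z : Ω → ℝ) (hZ : Measurable Z) (x : ℝ) :
    (∀ᵐ ω, x < Z ω) ∨ ∃ x' ∈ distSupport Z, ∀ᵐ ω, (x < Z ω ↔ x' < Z ω) := by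
  rw [distSupport_eq Z hZ]
  set F := Measure.map Z ℙ with hF
  have hae : ∀ᵐ ω, Z ω ∈ F.support := by
    have : ∀ᵐ z ∂F, z ∈ F.support := Measure.support_mem_ae
    exact ae_of_ae_map hZ.aemeasurable this
  have hcl : IsClosed F.support := Measure.isClosed_support
  by_cases hne : (F.support ∩ Iic x).Nonempty
  · right
    have hb : BddAbove (F.support ∩ Iic x) := ⟨x, fun z hz => hz.2⟩
    have hm := (hcl.inter isClosed_Iic).csSup_mem hne hb
    refine ⟨sSup (F.support ∩ Iic x), hm.1, ?_⟩
    filter_upwards [hae] with ω hω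
    constructor
    · intro h
      exact lt_of_le_of_lt hm.2 h
    · intro h
      by_contra h'
      have := le_csSup hb ⟨hω, not_lt.1 h'⟩
      linarith
  · left
    filter_upwards [hae] with ω hω
    by_contra h'
    exact hne ⟨_, hω, not_lt.1 h'⟩

lemma rvTail_eq (Z : Ω → ℝ) (hZ : Measurable Z) (x : ℝ) :
    rvTail Z x = (Measure.map Z ℙ).real (Ioi x) := by
  rw [map_measureReal_apply hZ measurableSet_Ioi]; rfl

lemma rvCdf_eq (Z : Ω → ℝ) (hZ : Measurable Z) (x : ℝ) :
    rvCdf Z x = 1 - rvTail Z x := by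
  have : {ω | Z ω ≤ x} = {ω | x < Z ω}ᶜ := by ext ω; simp
  unfold rvCdf rvTail
  rw [this]
  exact probReal_compl_eq_one_sub (hZ measurableSet_Ioi)

lemma fgm_all (X Y : Ω → ℝ) (hX : Measurable X) (hY : Measurable Y) (θ : ℝ) (h : FGM X Y θ) (x y : ℝ) :
    (ℙ {ω | x < X ω ∧ y < Y ω}).toReal =
        rvTail X x * rvTail Y y * (1 + θ * (1 - rvTail X x) * (1 - rvTail Y y)) := by
  have key : ∀ x ∈ distSupport X, ∀ y ∈ distSupport Y, (ℙ {ω | x < X ω ∧ y < Y ω}).toReal =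
        rvTail X x * rvTail Y y * (1 + θ * (1 - rvTail X x) * (1 - rvTail Y y)) := by
    intro x hx y hy
    rw [h.2 x hx y hy, rvCdf_eq X hX, rvCdf_eq Y hY]
  have one : ∀ (Z : Ω → ℝ) (z : ℝ), (∀ᵐ ω, z < Z ω) → rvTail Z z = 1 := by
    intro Z z hz
    have : ℙ {ω | z < Z ω} = 1 := by
      rw [← measure_univ (μ := (ℙ : Measure Ω))]
      apply measure_congr
      filter_upwards [hz] with ω hω
      exact propext ⟨fun _ => trivial, fun _ => hω⟩
    unfold rvTail; rw [this]; simp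
  rcases exists_support_le X hX x with hx | ⟨x', hx', hxe⟩
  · have e : ℙ {ω | x < X ω ∧ y < Y ω} = ℙ {ω | y < Y ω} := by
      apply measure_congr
      filter_upwards [hx] with ω hω
      exact propext ⟨fun hh => hh.2, fun hh => ⟨hω, hh⟩⟩
    rw [one X x hx, e]; simp [rvTail]
  rcases exists_support_le Y hY y with hy | ⟨y', hy', hye⟩
  · have e : ℙ {ω | x < X ω ∧ y < Y ω} = ℙ {ω | x < X ω} := by
      apply measure_congr
      filter_upwards [hy] with ω hω
      exact propext ⟨fun hh => hh.1, fun hh => ⟨hh, hω⟩⟩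
    rw [one Y y hy, e]; simp [rvTail]
  have e : ℙ {ω | x < X ω ∧ y < Y ω} = ℙ {ω | x' < X ω ∧ y' < Y ω} := by
    apply measure_congr
    filter_upwards [hxe, hye] with ω h1 h2
    exact propext ⟨fun hh => ⟨h1.1 hh.1, h2.1 hh.2⟩, fun hh => ⟨h1.2 hh.1, h2.2 hh.2⟩⟩
  have ex : rvTail X x = rvTail X x' := by
    unfold rvTail
    congr 1
    apply measure_congr
    filter_upwards [hxe] with ω h1
    exact propext h1
  have ey : rvTail Y y = rvTail Y y' := by
    unfold rvTail
    congr 1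
    apply measure_congr
    filter_upwards [hye] with ω h1
    exact propext h1
  rw [e, ex, ey, key x' hx' y' hy']

lemma fgm_joint (X Y : Ω → ℝ) (hX : Measurable X) (hY : Measurable Y) (θ : ℝ) (hθ : |θ| < 1) (h : FGM X Y θ) :
    Measure.map (fun ω => (X ω, Y ω)) ℙ = ((Measure.map X ℙ).prod (Measure.map Y ℙ)).withDensity
      (fun p => ENNReal.ofReal (fgmDens (Measure.map X ℙ) (Measure.map Y ℙ) θ p)) := by
  have := Measure.isProbabilityMeasure_map (μ := (ℙ : Measure Ω)) hX.aemeasurable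
  have := Measure.isProbabilityMeasure_map (μ := (ℙ : Measure Ω)) hY.aemeasurable
  have := Measure.isProbabilityMeasure_map (μ := (ℙ : Measure Ω)) (hX.prodMk hY).aemeasurable
  refine joint_eq_density _ _ _ θ hθ ?_
  intro x y
  rw [← rvTail_eq X hX, ← rvTail_eq Y hY, ← fgm_all X Y hX hY θ h, map_measureReal_apply (hX.prodMk hY)
    (measurableSet_Ioi.prod measurableSet_Ioi)]
  rfl

end fgmext


section convolution

/-- both summands are large -/
def bothSet (A x : ℝ) : Set (ℝ × ℝ) := {p | x < p.1 + p.2 ∧ A < p.1 ∧ A < p.2}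

lemma bothSet_meas (A x : ℝ) : MeasurableSet (bothSet A x) :=
  (measurableSet_lt measurable_const (measurable_fst.add measurable_snd)).inter
    ((measurableSet_lt measurable_const measurable_fst).inter
      (measurableSet_lt measurable_const measurable_snd))

lemma bothSet_anti {A A' : ℝ} (h : A ≤ A') (x : ℝ) : bothSet A' x ⊆ bothSet A x :=
  fun _ hp => ⟨hp.1, lt_of_le_of_lt h hp.2.1, lt_of_le_of_lt h hp.2.2⟩

lemma ratio_all (T : ℝ → ℝ) (γ : ℝ) (hpos : ∀ x, 0 < T x)
    (hL : ∀ t > 0, (fun x => T (x - t)) ~[atTop] (fun x => Real.exp (γ * t) * T x)) (t : ℝ) :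
    Tendsto (fun x => T (x - t) / T x) atTop (nhds (Real.exp (γ * t))) := by
  have hp : ∀ t > 0, Tendsto (fun x => T (x - t) / T x) atTop (nhds (Real.exp (γ * t))) := by
    intro t ht
    have h := (isEquivalent_iff_tendsto_one (Eventually.of_forall fun x => by
      have := hpos x; positivity)).1 (hL t ht)
    have h2 := h.const_mul (Real.exp (γ * t))
    rw [mul_one] at h2
    refine h2.congr fun x => ?_
    have := (hpos x).ne'
    simp only [Pi.div_apply]
    field_simp
  rcases lt_trichotomy t 0 with ht | ht | ht
  · have h := (hp (-t) (by linarith)).comp (tendsto_atTop_add_const_right atTop (-t) tendsto_id)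
    have h2 := h.inv₀ (Real.exp_pos _).ne'
    rw [← Real.exp_neg] at h2
    have e : -(γ * -t) = γ * t := by ring
    rw [e] at h2
    refine h2.congr fun x => ?_
    simp only [Function.comp, id, inv_div]
    congr 2
    ring
  · subst ht
    simp only [sub_zero, mul_zero, Real.exp_zero]
    refine tendsto_const_nhds.congr fun x => ?_
    rw [div_self (hpos x).ne']
  · exact hp t ht

lemma conv_decomp (V : Measure ℝ) [IsProbabilityMeasure V] (A x : ℝ) (hx : 2 * A ≤ x) :
    (V.conv V).real (Ioi x) = 2 * (∫ v in Iic A, V.real (Ioi (x - v)) ∂V) +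
      (V.prod V).real (bothSet A x) := by
  have hm : Measurable (fun p : ℝ × ℝ => p.1 + p.2) := measurable_fst.add measurable_snd
  have h0 : (V.conv V).real (Ioi x) = (V.prod V).real {p | x < p.1 + p.2} := by
    unfold Measure.conv
    rw [map_measureReal_apply hm measurableSet_Ioi]
    rfl
  have hS : MeasurableSet {p : ℝ × ℝ | x < p.1 + p.2} := measurableSet_lt measurable_const hm
  have hS1 : MeasurableSet {p : ℝ × ℝ | p.1 ≤ A ∧ x < p.1 + p.2} :=
    (measurableSet_le measurable_fst measurable_const).inter hS
  have hS2 : MeasurableSet {p : ℝ × ℝ | p.2 ≤ A ∧ x < p.1 + p.2} :=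
    (measurableSet_le measurable_snd measurable_const).inter hS
  have e1 : (V.prod V).real {p : ℝ × ℝ | p.1 ≤ A ∧ x < p.1 + p.2} =
      ∫ v in Iic A, V.real (Ioi (x - v)) ∂V := by
    rw [integral_real_section V V _ hS1, ← integral_indicator measurableSet_Iic]
    refine integral_congr_ae (Eventually.of_forall fun v => ?_)
    by_cases hv : v ≤ A
    · have : (Prod.mk v ⁻¹' {p : ℝ × ℝ | p.1 ≤ A ∧ x < p.1 + p.2}) = Ioi (x - v) := by
        ext w
        simp only [mem_preimage, mem_ofPred_eq, mem_Ioi, hv, true_and]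
        constructor <;> intro h <;> linarith
      simp only [this]
      rw [indicator_of_mem (by exact hv)]
    · simp [indicator, hv, preimage]
  have e2 : (V.prod V).real {p : ℝ × ℝ | p.2 ≤ A ∧ x < p.1 + p.2} =
      (V.prod V).real {p : ℝ × ℝ | p.1 ≤ A ∧ x < p.1 + p.2} := by
    conv_rhs => rw [← Measure.prod_swap (μ := V) (ν := V)]
    rw [map_measureReal_apply measurable_swap hS1]
    congr 1
    ext ⟨a, b⟩
    simp [add_comm]
  have hU : {p : ℝ × ℝ | x < p.1 + p.2} = ({p : ℝ × ℝ | p.1 ≤ A ∧ x < p.1 + p.2} ∪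
      {p : ℝ × ℝ | p.2 ≤ A ∧ x < p.1 + p.2}) ∪ bothSet A x := by
    ext ⟨a, b⟩
    simp only [bothSet, mem_union, mem_ofPred_eq]
    constructor
    · intro h
      by_cases ha : a ≤ A
      · exact Or.inl (Or.inl ⟨ha, h⟩)
      by_cases hb : b ≤ A
      · exact Or.inl (Or.inr ⟨hb, h⟩)
      · exact Or.inr ⟨h, not_le.1 ha, not_le.1 hb⟩
    · tauto
  rw [h0, hU, measureReal_union _ (bothSet_meas A x), measureReal_union _ hS2, e2, e1]
  · ring
  · rw [Set.disjoint_left]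
    rintro ⟨a, b⟩ ⟨h1, h2⟩ ⟨h3, _⟩
    simp only at h1 h2 h3
    linarith
  · rw [Set.disjoint_left]
    rintro ⟨a, b⟩ (⟨h1, h2⟩ | ⟨h1, h2⟩) ⟨h3, h4, h5⟩ <;> simp only at h1 h4 h5 <;> linarith

lemma low_tendsto (V : Measure ℝ) [IsProbabilityMeasure V] (γ : ℝ) (hpos : ∀ x, 0 < V.real (Ioi x))
    (hL : ∀ t, Tendsto (fun x => V.real (Ioi (x - t)) / V.real (Ioi x)) atTop (nhds (Real.exp (γ * t))))
    (A : ℝ) :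
    Tendsto (fun x => (∫ v in Iic A, V.real (Ioi (x - v)) ∂V) / V.real (Ioi x)) atTop
      (nhds (∫ v in Iic A, Real.exp (γ * v) ∂V)) := by
  simp_rw [← integral_div]
  have hb : ∀ᶠ x in atTop, V.real (Ioi (x - A)) / V.real (Ioi x) ≤ Real.exp (γ * A) + 1 :=
    ((hL A).eventually_lt_const (lt_add_one _)).mono fun _ h => h.le
  refine tendsto_integral_filter_of_dominated_convergence (fun _ => Real.exp (γ * A) + 1) ?_ ?_ ?_ ?_
  · refine Eventually.of_forall fun x => ?_
    have : Measurable fun v => V.real (Ioi (x - v)) :=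
      (real_Ioi_meas V).comp (measurable_const.sub measurable_id)
    exact (this.div_const _).aestronglyMeasurable
  · filter_upwards [hb] with x hx
    filter_upwards [ae_restrict_mem measurableSet_Iic] with v hv
    rw [Real.norm_eq_abs, abs_of_nonneg (by positivity)]
    refine le_trans ?_ hx
    have := hpos x
    gcongr
    · exact measure_ne_top _ _
    · exact hv
  · exact integrable_const _
  · exact Eventually.of_forall fun v => hL v

lemma both_of_conv (V : Measure ℝ) [IsProbabilityMeasure V] (γ : ℝ) (hpos : ∀ x, 0 < V.real (Ioi x))
    (hL : ∀ t, Tendsto (fun x => V.real (Ioi (x - t)) / V.real (Ioi x)) atTop (nhds (Real.exp (γ * t))))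
    (hI : Integrable (fun y => Real.exp (γ * y)) V)
    (hS : Tendsto (fun x => (V.conv V).real (Ioi x) / V.real (Ioi x)) atTop
      (nhds (2 * ∫ y, Real.exp (γ * y) ∂V))) (ε : ℝ) (hε : 0 < ε) :
    ∃ A > 0, ∀ᶠ x in atTop, (V.prod V).real (bothSet A x) ≤ ε * V.real (Ioi x) := by
  have h1 : Tendsto (fun A : ℝ => ∫ v in Iic A, Real.exp (γ * v) ∂V) atTop
      (nhds (∫ y, Real.exp (γ * y) ∂V)) := by
    have := (aecover_Iic (μ := V) (tendsto_id (α := ℝ) (x := atTop))).integral_tendsto_of_countably_generated hI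
    exact this
  obtain ⟨A, hA, hA0⟩ := ((h1.eventually_const_lt (show (∫ y, Real.exp (γ * y) ∂V) - ε / 4 < _ by linarith)).and
    (eventually_gt_atTop 0)).exists
  refine ⟨A, hA0, ?_⟩
  have h2 := hS.sub ((low_tendsto V γ hpos hL A).const_mul 2)
  have h3 := h2.eventually_lt_const (show _ < ε by linarith)
  filter_upwards [h3, eventually_ge_atTop (2 * A)] with x hx hx2
  have hp := hpos x
  rw [conv_decomp V A x hx2, add_div, mul_div_assoc, add_sub_cancel_left] at hx
  rw [div_lt_iff₀ hp] at hx
  exact hx.le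

lemma conv_of_both (V : Measure ℝ) [IsProbabilityMeasure V] (γ : ℝ) (hpos : ∀ x, 0 < V.real (Ioi x))
    (hL : ∀ t, Tendsto (fun x => V.real (Ioi (x - t)) / V.real (Ioi x)) atTop (nhds (Real.exp (γ * t))))
    (hI : Integrable (fun y => Real.exp (γ * y)) V)
    (hB : ∀ ε > 0, ∃ A, ∀ᶠ x in atTop, (V.prod V).real (bothSet A x) ≤ ε * V.real (Ioi x)) :
    Tendsto (fun x => (V.conv V).real (Ioi x) / V.real (Ioi x)) atTop
      (nhds (2 * ∫ y, Real.exp (γ * y) ∂V)) := by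
  have h1 : Tendsto (fun A : ℝ => ∫ v in Iic A, Real.exp (γ * v) ∂V) atTop
      (nhds (∫ y, Real.exp (γ * y) ∂V)) :=
    (aecover_Iic (μ := V) (tendsto_id (α := ℝ) (x := atTop))).integral_tendsto_of_countably_generated hI
  rw [Metric.tendsto_nhds]
  intro ε hε
  obtain ⟨A0, hA0⟩ := hB (ε / 4) (by linarith)
  obtain ⟨A, hA, hAA⟩ := (((Metric.tendsto_nhds.1 h1) (ε / 8) (by linarith)).and (eventually_ge_atTop A0)).exists
  have h2 := Metric.tendsto_nhds.1 (low_tendsto V γ hpos hL A) (ε / 8) (by linarith)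
  filter_upwards [h2, hA0, eventually_ge_atTop (2 * A)] with x hx hx0 hx2
  have hp := hpos x
  have hb : (V.prod V).real (bothSet A x) / V.real (Ioi x) ≤ ε / 4 := by
    rw [div_le_iff₀ hp]
    exact (measureReal_mono (bothSet_anti hAA x)).trans hx0
  have hb0 : 0 ≤ (V.prod V).real (bothSet A x) / V.real (Ioi x) := by positivity
  rw [conv_decomp V A x hx2, add_div, mul_div_assoc]
  rw [Real.dist_eq, abs_lt] at hx hA ⊢
  constructor <;> linarith [hx.1, hx.2, hA.1, hA.2]

end convolution


section indep

/-- tail of product section -/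
def dF (F : Measure ℝ) (x y : ℝ) : ℝ := if 0 < y then F.real (Ioi (x / y)) else 0

lemma dF_nonneg (F : Measure ℝ) (x y : ℝ) : 0 ≤ dF F x y := by
  unfold dF; split_ifs <;> positivity

lemma dF_le_one (F : Measure ℝ) [IsProbabilityMeasure F] (x y : ℝ) : dF F x y ≤ 1 := by
  unfold dF; split_ifs
  · exact measureReal_le_one
  · norm_num

lemma dF_meas (F : Measure ℝ) [IsProbabilityMeasure F] (x : ℝ) : Measurable (dF F x) := by
  unfold dF
  refine Measurable.ite measurableSet_Ioi ?_ measurable_const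
  exact (real_Ioi_meas F).comp (measurable_const.div measurable_id)

lemma dF_int (F G : Measure ℝ) [IsProbabilityMeasure F] [IsProbabilityMeasure G] (x : ℝ) :
    Integrable (dF F x) G :=
  Integrable.of_bound (C := 1) (dF_meas F x).aestronglyMeasurable
    (Eventually.of_forall fun y => by
      rw [Real.norm_eq_abs, abs_of_nonneg (dF_nonneg F x y)]; exact dF_le_one F x y)

/-- law of the independent product -/
def prodLaw (F G : Measure ℝ) : Measure ℝ := (F.prod G).map (fun p => p.1 * p.2)

lemma mul_meas : Measurable (fun p : ℝ × ℝ => p.1 * p.2) := measurable_fst.mul measurable_snd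

instance prodLaw_prob (F G : Measure ℝ) [IsProbabilityMeasure F] [IsProbabilityMeasure G] :
    IsProbabilityMeasure (prodLaw F G) :=
  Measure.isProbabilityMeasure_map mul_meas.aemeasurable

lemma integral_real_section' (F G : Measure ℝ) [IsProbabilityMeasure F] [IsProbabilityMeasure G]
    (S : Set (ℝ × ℝ)) (hS : MeasurableSet S) :
    (F.prod G).real S = ∫ y, F.real ((fun v => (v, y)) ⁻¹' S) ∂G := by
  rw [measureReal_def, Measure.prod_apply_symm hS, ← integral_toReal]
  · rfl
  · exact (measurable_measure_prodMk_right hS).aemeasurable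
  · exact Eventually.of_forall (fun x => measure_lt_top _ _)

lemma prodLaw_tail (F G : Measure ℝ) [IsProbabilityMeasure F] [IsProbabilityMeasure G]
    (hG : ∀ᵐ y ∂G, 0 ≤ y) (x : ℝ) (hx : 0 ≤ x) :
    (prodLaw F G).real (Ioi x) = ∫ y, dF F x y ∂G := by
  unfold prodLaw
  rw [map_measureReal_apply mul_meas measurableSet_Ioi,
    integral_real_section' F G _ (mul_meas measurableSet_Ioi)]
  refine integral_congr_ae ?_
  filter_upwards [hG] with y hy
  rcases hy.eq_or_lt with h | h
  · subst h
    have : (fun v : ℝ => (v, (0:ℝ))) ⁻¹' ((fun p : ℝ × ℝ => p.1 * p.2) ⁻¹' Ioi x) = ∅ := by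
      ext v; simp [hx]
    simp only [this, dF]
    simp
  · have : (fun v : ℝ => (v, y)) ⁻¹' ((fun p : ℝ × ℝ => p.1 * p.2) ⁻¹' Ioi x) = Ioi (x / y) := by
      ext v; simp [div_lt_iff₀ h]
    simp only [this, dF, h, if_true]

lemma four_fold (F G : Measure ℝ) [IsProbabilityMeasure F] [IsProbabilityMeasure G]
    (S : Set (ℝ × ℝ)) (hS : MeasurableSet S) :
    ((prodLaw F G).prod (prodLaw F G)).real S =
      ∫ q, (F.prod F).real {p | (p.1 * q.1, p.2 * q.2) ∈ S} ∂(G.prod G) := by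
  have hm4 : Measurable (fun r : (ℝ × ℝ) × (ℝ × ℝ) => (r.1.1 * r.2.1, r.1.2 * r.2.2)) := by fun_prop
  have hT : MeasurableSet ((fun r : (ℝ × ℝ) × (ℝ × ℝ) => (r.1.1 * r.2.1, r.1.2 * r.2.2)) ⁻¹' S) := hm4 hS
  set f : ℝ × ℝ → ENNReal := S.indicator 1 with hf
  have hfm : Measurable f := measurable_one.indicator hS
  have key : ((prodLaw F G).prod (prodLaw F G)) S =
      ∫⁻ q, (F.prod F) {p | (p.1 * q.1, p.2 * q.2) ∈ S} ∂(G.prod G) := by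
    have l1 : ((prodLaw F G).prod (prodLaw F G)) S = ∫⁻ x1, ∫⁻ y1, ∫⁻ x2, ∫⁻ y2, f (x1 * y1, x2 * y2) ∂G ∂F ∂G ∂F := by
      rw [← lintegral_indicator_one hS, lintegral_prod _ hfm.aemeasurable]
      unfold prodLaw
      rw [lintegral_map _ mul_meas, lintegral_prod]
      · refine lintegral_congr fun x1 => lintegral_congr fun y1 => ?_
        rw [lintegral_map _ mul_meas, lintegral_prod]
        · fun_prop
        · fun_prop
      · refine Measurable.aemeasurable ?_
        exact (Measurable.lintegral_prod_right' hfm).comp mul_meas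
      · exact (Measurable.lintegral_prod_right' hfm)
    have l2 : ∫⁻ q, (F.prod F) {p | (p.1 * q.1, p.2 * q.2) ∈ S} ∂(G.prod G) =
        ∫⁻ x1, ∫⁻ x2, ∫⁻ y1, ∫⁻ y2, f (x1 * y1, x2 * y2) ∂G ∂G ∂F ∂F := by
      have e1 : ∀ q : ℝ × ℝ, (F.prod F) {p | (p.1 * q.1, p.2 * q.2) ∈ S} =
          ∫⁻ p, f (p.1 * q.1, p.2 * q.2) ∂(F.prod F) := by
        intro q
        rw [← lintegral_indicator_one]
        · rfl
        · have : Measurable (fun p : ℝ × ℝ => (p.1 * q.1, p.2 * q.2)) := by fun_prop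
          exact this hS
      simp_rw [e1]
      rw [lintegral_lintegral_swap, lintegral_prod]
      · refine lintegral_congr fun x1 => lintegral_congr fun x2 => ?_
        rw [lintegral_prod]
        fun_prop
      · refine Measurable.aemeasurable ?_
        refine Measurable.lintegral_prod_right (f := fun p q : ℝ × ℝ => f (p.1 * q.1, p.2 * q.2)) ?_
        fun_prop
      · refine Measurable.aemeasurable ?_
        fun_prop
    rw [l1, l2]
    refine lintegral_congr fun x1 => ?_
    rw [lintegral_lintegral_swap]
    refine Measurable.aemeasurable ?_
    refine Measurable.lintegral_prod_right (f := fun (p : ℝ × ℝ) (y2 : ℝ) => f (x1 * p.1, p.2 * y2)) ?_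
    fun_prop
  rw [measureReal_def, key, ← integral_toReal]
  · rfl
  · exact (measurable_measure_prodMk_right hT).aemeasurable
  · exact Eventually.of_forall (fun x => measure_lt_top _ _)

end indep


section indep2

lemma real_tail_anti (F : Measure ℝ) [IsProbabilityMeasure F] {a b : ℝ} (h : a ≤ b) :
    F.real (Ioi b) ≤ F.real (Ioi a) := measureReal_mono (Ioi_subset_Ioi h)

lemma tail_tendsto_zero (F : Measure ℝ) [IsProbabilityMeasure F] :
    Tendsto (fun x => F.real (Ioi x)) atTop (nhds 0) := by
  have h := tendsto_measure_Iic_atTop F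
  have h2 : Tendsto (fun x => F.real (Iic x)) atTop (nhds 1) := by
    have := (ENNReal.tendsto_toReal (measure_ne_top F univ)).comp h
    simpa [measureReal_def, Function.comp_def] using this
  have h3 := h2.const_sub 1
  rw [sub_self] at h3
  refine h3.congr fun x => ?_
  rw [← probReal_compl_eq_one_sub measurableSet_Iic, compl_Iic]

/-- the event for the weighted sum -/
def wSet (A x y1 y2 : ℝ) : Set (ℝ × ℝ) := {p | (p.1 * y1, p.2 * y2) ∈ bothSet A x}

lemma wSet_meas (A x y1 y2 : ℝ) : MeasurableSet (wSet A x y1 y2) := by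
  have : Measurable (fun p : ℝ × ℝ => (p.1 * y1, p.2 * y2)) := by fun_prop
  exact this (bothSet_meas A x)

lemma wSet_swap (F : Measure ℝ) [IsProbabilityMeasure F] (A x y1 y2 : ℝ) :
    (F.prod F).real (wSet A x y1 y2) = (F.prod F).real (wSet A x y2 y1) := by
  conv_rhs => rw [← Measure.prod_swap (μ := F) (ν := F)]
  rw [map_measureReal_apply measurable_swap (wSet_meas A x y2 y1)]
  congr 1
  ext ⟨a, b⟩
  simp only [wSet, bothSet, mem_ofPred_eq, mem_preimage, Prod.swap]
  constructor <;> rintro ⟨h1, h2, h3⟩ <;> exact ⟨by linarith, h3, h2⟩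

lemma pt_bound (F : Measure ℝ) [IsProbabilityMeasure F] (ε a0 C u0 b K L A x y1 y2 : ℝ)
    (ha0 : 0 < a0) (hC : 0 < C) (hb : 0 < b) (hL : 0 < L) (hA : 0 < A) (hx : 0 < x) (hε : 0 < ε)
    (h1 : ∀ u ≥ u0, (F.prod F).real (bothSet a0 u) ≤ ε * F.real (Ioi u))
    (h2 : ∀ u ≥ u0, F.real (Ioi (u - a0)) ≤ C * F.real (Ioi u))
    (hb1 : b * u0 ≤ 1) (hb2 : b * (2 * a0) ≤ 1) (hy1 : 0 < y1) (hy : y1 ≤ y2) :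
    (F.prod F).real (wSet A x y1 y2) ≤
      dF F x y2 * (ε + C * dF F A y1 + C * F.real (Ioi (A / K)) + C * (Ioi L).indicator 1 y1) +
      ((Ioi (b * x)).indicator 1 y2 + F.real (Ioi (x / (2 * L))) * (Ioi K).indicator 1 y2) := by
  have hy2 : 0 < y2 := hy1.trans_le hy
  have hi : ∀ (s : Set ℝ) (y : ℝ), 0 ≤ s.indicator (1 : ℝ → ℝ) y := fun s y =>
    indicator_nonneg (fun _ _ => by simp) y
  have hα : 0 ≤ dF F x y2 * (ε + C * dF F A y1 + C * F.real (Ioi (A / K)) + C * (Ioi L).indicator 1 y1) := by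
    have := dF_nonneg F x y2
    have := dF_nonneg F A y1
    have := hi (Ioi L) y1
    positivity
  have hβ2 : 0 ≤ F.real (Ioi (x / (2 * L))) * (Ioi K).indicator 1 y2 :=
    mul_nonneg measureReal_nonneg (hi _ _)
  by_cases hyb : b * x < y2
  · have : (Ioi (b * x)).indicator (1 : ℝ → ℝ) y2 = 1 := by simp [indicator, hyb]
    rw [this]
    have : (F.prod F).real (wSet A x y1 y2) ≤ 1 := measureReal_le_one
    linarith
  push Not at hyb
  have hu : u0 ≤ x / y2 := by
    rw [le_div_iff₀ hy2]
    rcases le_or_gt u0 0 with h | h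
    · nlinarith
    · calc u0 * y2 ≤ u0 * (b * x) := by gcongr
        _ = (b * u0) * x := by ring
        _ ≤ 1 * x := by gcongr
        _ = x := one_mul x
  have ha : a0 * y2 ≤ x / 2 := by
    have : a0 * y2 ≤ a0 * (b * x) := by gcongr
    nlinarith
  have hsub : wSet A x y1 y2 ⊆ (bothSet a0 (x / y2) ∪ Ioi (A / y1) ×ˢ Ioi (x / y2 - a0)) ∪
      Ioi ((x - a0 * y2) / y1) ×ˢ Ioi (A / y2) := by
    rintro ⟨p1, p2⟩ ⟨e1, e2, e3⟩
    simp only at e1 e2 e3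
    have hp1 : 0 < p1 := by
      by_contra h
      have : p1 * y1 ≤ 0 := mul_nonpos_of_nonpos_of_nonneg (not_lt.1 h) hy1.le
      linarith
    by_cases c1 : p1 * y1 ≤ a0 * y2
    · left; right
      constructor
      · simp only [mem_Ioi]; rwa [div_lt_iff₀ hy1]
      · simp only [mem_Ioi]
        rw [sub_lt_iff_lt_add, div_lt_iff₀ hy2]
        nlinarith
    by_cases c2 : p2 ≤ a0
    · right
      constructor
      · simp only [mem_Ioi]; rw [div_lt_iff₀ hy1]
        have : p2 * y2 ≤ a0 * y2 := by gcongr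
        linarith
      · simp only [mem_Ioi]; rwa [div_lt_iff₀ hy2]
    · left; left
      push Not at c1 c2
      have : p1 * y1 ≤ p1 * y2 := by gcongr
      refine ⟨?_, ?_, c2⟩
      · simp only
        rw [div_lt_iff₀ hy2]; nlinarith
      · simp only
        by_contra h
        have : p1 * y2 ≤ a0 * y2 := by gcongr; exact not_lt.1 h
        linarith
  have hm : (F.prod F).real (wSet A x y1 y2) ≤ ε * F.real (Ioi (x / y2)) +
      F.real (Ioi (A / y1)) * F.real (Ioi (x / y2 - a0)) +
      F.real (Ioi ((x - a0 * y2) / y1)) * F.real (Ioi (A / y2)) := by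
    refine (measureReal_mono hsub).trans ((measureReal_union_le _ _).trans ?_)
    rw [measureReal_prod_prod]
    gcongr
    refine (measureReal_union_le _ _).trans ?_
    rw [measureReal_prod_prod]
    gcongr
    exact h1 _ hu
  have hd : dF F x y2 = F.real (Ioi (x / y2)) := by simp [dF, hy2]
  have hd1 : dF F A y1 = F.real (Ioi (A / y1)) := by simp [dF, hy1]
  have hT := h2 _ hu
  have hr : F.real (Ioi ((x - a0 * y2) / y1)) ≤ C * F.real (Ioi (x / y2)) := by
    refine (real_tail_anti F ?_).trans hT
    have : x / y2 - a0 = (x - a0 * y2) / y2 := by field_simp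
    rw [this]
    apply div_le_div_of_nonneg_left _ hy1 hy
    linarith
  have hthird : F.real (Ioi ((x - a0 * y2) / y1)) * F.real (Ioi (A / y2)) ≤
      F.real (Ioi (x / y2)) * (C * F.real (Ioi (A / K)) + C * (Ioi L).indicator 1 y1) +
      F.real (Ioi (x / (2 * L))) * (Ioi K).indicator 1 y2 := by
    have n1 : 0 ≤ F.real (Ioi (x / y2)) := measureReal_nonneg
    have n2 : 0 ≤ F.real (Ioi (A / K)) := measureReal_nonneg
    have n3 : 0 ≤ F.real (Ioi (A / y2)) := measureReal_nonneg
    have n4 : F.real (Ioi (A / y2)) ≤ 1 := measureReal_le_one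
    have n5 : 0 ≤ F.real (Ioi ((x - a0 * y2) / y1)) := measureReal_nonneg
    by_cases hK : K < y2
    · by_cases hLy : L < y1
      · have e : (Ioi L).indicator (1 : ℝ → ℝ) y1 = 1 := by simp [indicator, hLy]
        rw [e]
        have : F.real (Ioi ((x - a0 * y2) / y1)) * F.real (Ioi (A / y2)) ≤ C * F.real (Ioi (x / y2)) * 1 := by
          gcongr
        nlinarith [mul_nonneg n1 (mul_nonneg hC.le n2)]
      · push Not at hLy
        have e : (Ioi K).indicator (1 : ℝ → ℝ) y2 = 1 := by simp [indicator, hK]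
        rw [e]
        have h3 : F.real (Ioi ((x - a0 * y2) / y1)) ≤ F.real (Ioi (x / (2 * L))) := by
          apply real_tail_anti
          calc x / (2 * L) = (x / 2) / L := by field_simp
            _ ≤ (x - a0 * y2) / L := by gcongr; linarith
            _ ≤ (x - a0 * y2) / y1 := by
              apply div_le_div_of_nonneg_left _ hy1 hLy
              linarith
        have h4 : F.real (Ioi ((x - a0 * y2) / y1)) * F.real (Ioi (A / y2)) ≤ F.real (Ioi (x / (2 * L))) * 1 := by
          gcongr
        have h5 : 0 ≤ F.real (Ioi (x / y2)) * (C * F.real (Ioi (A / K)) + C * (Ioi L).indicator 1 y1) := by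
          have := hi (Ioi L) y1
          positivity
        linarith
    · push Not at hK
      have h3 : F.real (Ioi (A / y2)) ≤ F.real (Ioi (A / K)) := by
        apply real_tail_anti; gcongr
      have h4 : F.real (Ioi ((x - a0 * y2) / y1)) * F.real (Ioi (A / y2)) ≤
          C * F.real (Ioi (x / y2)) * F.real (Ioi (A / K)) := by gcongr
      have h5 : 0 ≤ F.real (Ioi (x / y2)) * (C * (Ioi L).indicator 1 y1) := by
        have := hi (Ioi L) y1
        positivity
      nlinarith
  rw [hd, hd1]
  have hsec : F.real (Ioi (A / y1)) * F.real (Ioi (x / y2 - a0)) ≤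
      F.real (Ioi (A / y1)) * (C * F.real (Ioi (x / y2))) := by gcongr
  have := hi (Ioi (b * x)) y2
  nlinarith

end indep2


section indep3

lemma bdd_int {α : Type*} [MeasurableSpace α] (G : Measure α) [IsProbabilityMeasure G] (f : α → ℝ) (hf : Measurable f)
    (C : ℝ) (h : ∀ y, |f y| ≤ C) : Integrable f G :=
  Integrable.of_bound (C := C) hf.aestronglyMeasurable
    (Eventually.of_forall fun y => by simpa using h y)

lemma ind_int (G : Measure ℝ) [IsProbabilityMeasure G] (a : ℝ) :
    Integrable ((Ioi a).indicator (1 : ℝ → ℝ)) G :=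
  (integrable_const (1:ℝ)).indicator measurableSet_Ioi

lemma ind_integral (G : Measure ℝ) [IsProbabilityMeasure G] (a : ℝ) :
    ∫ y, (Ioi a).indicator (1 : ℝ → ℝ) y ∂G = G.real (Ioi a) :=
  integral_indicator_one measurableSet_Ioi

lemma sym_integral (G : Measure ℝ) [IsProbabilityMeasure G] (d α β : ℝ → ℝ)
    (hd : Integrable d G) (hα : Integrable α G) (hβ : Integrable β G) :
    Integrable (fun q : ℝ × ℝ => (d q.2 * α q.1 + β q.2) + (d q.1 * α q.2 + β q.1)) (G.prod G) ∧
    ∫ q, ((d q.2 * α q.1 + β q.2) + (d q.1 * α q.2 + β q.1)) ∂(G.prod G) =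
      2 * ((∫ y, d y ∂G) * (∫ y, α y ∂G) + ∫ y, β y ∂G) := by
  have i1 : Integrable (fun q : ℝ × ℝ => d q.1 * α q.2) (G.prod G) := hd.mul_prod hα
  have i2 : Integrable (fun q : ℝ × ℝ => d q.2 * α q.1) (G.prod G) := by
    have := hα.mul_prod hd
    simpa [mul_comm] using this
  have i3 : Integrable (fun q : ℝ × ℝ => β q.1) (G.prod G) := hβ.comp_fst G
  have i4 : Integrable (fun q : ℝ × ℝ => β q.2) (G.prod G) := hβ.comp_snd G
  have i5 : Integrable (fun q : ℝ × ℝ => d q.2 * α q.1 + β q.2) (G.prod G) := i2.add i4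
  have i6 : Integrable (fun q : ℝ × ℝ => d q.1 * α q.2 + β q.1) (G.prod G) := i1.add i3
  refine ⟨i5.add i6, ?_⟩
  rw [integral_add i5 i6, integral_add i2 i4, integral_add i1 i3]
  have e1 : ∫ q : ℝ × ℝ, d q.1 * α q.2 ∂(G.prod G) = (∫ y, d y ∂G) * (∫ y, α y ∂G) :=
    integral_prod_mul d α
  have e2 : ∫ q : ℝ × ℝ, d q.2 * α q.1 ∂(G.prod G) = (∫ y, d y ∂G) * (∫ y, α y ∂G) := by
    rw [mul_comm, ← integral_prod_mul α d]
    simp [mul_comm]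
  have e3 : ∫ q : ℝ × ℝ, β q.1 ∂(G.prod G) = ∫ y, β y ∂G := by
    rw [integral_fun_fst]; simp
  have e4 : ∫ q : ℝ × ℝ, β q.2 ∂(G.prod G) = ∫ y, β y ∂G := by
    rw [integral_fun_snd]; simp
  rw [e1, e2, e3, e4]; ring

/-- lower bound of the product tail -/
lemma prodLaw_lower (F G : Measure ℝ) [IsProbabilityMeasure F] [IsProbabilityMeasure G] (x y : ℝ) (hx : 0 ≤ x) (hy : 0 < y) :
    F.real (Ioi (x / y)) * G.real (Ioi y) ≤ (prodLaw F G).real (Ioi x) := by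
  unfold prodLaw
  rw [map_measureReal_apply mul_meas measurableSet_Ioi, ← measureReal_prod_prod]
  refine measureReal_mono ?_
  rintro ⟨a, c⟩ ⟨h1, h2⟩
  simp only [mem_Ioi, mem_preimage] at *
  have ha : 0 ≤ x / y := by positivity
  rw [div_lt_iff₀ hy] at h1
  have : 0 < a := by
    by_contra h
    have : a * y ≤ 0 := mul_nonpos_of_nonpos_of_nonneg (not_lt.1 h) hy.le
    linarith
  nlinarith

lemma indep_both (F G : Measure ℝ) [IsProbabilityMeasure F] [IsProbabilityMeasure G]
    (hG : ∀ᵐ y ∂G, 0 ≤ y)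
    (hF : ∀ ε > 0, ∃ A > 0, ∀ᶠ u in atTop, (F.prod F).real (bothSet A u) ≤ ε * F.real (Ioi u))
    (hFL : ∀ a, ∃ C > 0, ∀ᶠ u in atTop, F.real (Ioi (u - a)) ≤ C * F.real (Ioi u))
    (hA2 : ∀ b > 0, ∀ ε > 0, ∀ᶠ x in atTop, G.real (Ioi (b * x)) ≤ ε * (prodLaw F G).real (Ioi x))
    (ε : ℝ) (hε : 0 < ε) :
    ∃ A, ∀ᶠ x in atTop, ((prodLaw F G).prod (prodLaw F G)).real (bothSet A x) ≤
      ε * (prodLaw F G).real (Ioi x) := by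
  set W := prodLaw F G with hW
  set e := ε / 12 with he
  have hepos : 0 < e := by positivity
  obtain ⟨a0, ha0, hF1⟩ := hF e hepos
  obtain ⟨C, hC, hF2⟩ := hFL a0
  obtain ⟨u1, hu1⟩ := eventually_atTop.1 (hF1.and hF2)
  set u0 := max u1 1 with hu0
  have hu0pos : 0 < u0 := lt_of_lt_of_le one_pos (le_max_right _ _)
  -- choose b
  set b := 1 / max u0 (2 * a0) with hb
  have hmaxpos : 0 < max u0 (2 * a0) := lt_of_lt_of_le hu0pos (le_max_left _ _)
  have hbpos : 0 < b := by positivity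
  have hb1 : b * u0 ≤ 1 := by
    rw [hb, one_div, inv_mul_le_iff₀ hmaxpos, mul_one]; exact le_max_left _ _
  have hb2 : b * (2 * a0) ≤ 1 := by
    rw [hb, one_div, inv_mul_le_iff₀ hmaxpos, mul_one]; exact le_max_right _ _
  -- choose L
  have hsmall : ∀ (V : Measure ℝ) [IsProbabilityMeasure V] (η : ℝ), 0 < η → ∀ᶠ x in atTop, V.real (Ioi x) ≤ η := by
    intro V _ η hη
    exact ((tail_tendsto_zero V).eventually_lt_const hη).mono fun _ h => h.le
  obtain ⟨L, hL1, hL⟩ := ((hsmall G (e / C) (by positivity)).and (eventually_gt_atTop 0)).exists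
  have hK : ∃ K > 0, G.real (Ioi K) ≤ e * G.real (Ioi (2 * L)) := by
    rcases (measureReal_nonneg (μ := G) (s := Ioi (2 * L))).eq_or_lt with h | h
    · exact ⟨2 * L, by positivity, by rw [← h]; simp⟩
    · obtain ⟨K, hK1, hK⟩ := ((hsmall G (e * G.real (Ioi (2 * L))) (by positivity)).and (eventually_gt_atTop 0)).exists
      exact ⟨K, hK, hK1⟩
  obtain ⟨K, hK, hK1⟩ := hK
  have hdivK : Tendsto (fun A : ℝ => A / K) atTop atTop := tendsto_id.atTop_div_const hK
  obtain ⟨A, ⟨hA1, hA2'⟩, hA⟩ := (((hsmall W (e / C) (by positivity)).and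
    (hdivK.eventually (hsmall F (e / C) (by positivity)))).and (eventually_gt_atTop 0)).exists
  refine ⟨A, ?_⟩
  filter_upwards [hA2 b hbpos e hepos, eventually_gt_atTop 0] with x hx hx0
  set α : ℝ → ℝ := fun y => e + C * dF F A y + C * F.real (Ioi (A / K)) + C * (Ioi L).indicator 1 y with hα
  set β : ℝ → ℝ := fun y => (Ioi (b * x)).indicator 1 y + F.real (Ioi (x / (2 * L))) * (Ioi K).indicator 1 y with hβ
  have iα1 : Integrable (fun y => e + C * dF F A y) G := (integrable_const _).add ((dF_int F G A).const_mul C)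
  have iα2 : Integrable (fun y => e + C * dF F A y + C * F.real (Ioi (A / K))) G := iα1.add (integrable_const _)
  have iα : Integrable α G := iα2.add ((ind_int G L).const_mul C)
  have iβ : Integrable β G := (ind_int G _).add ((ind_int G K).const_mul _)
  obtain ⟨hi, hs⟩ := sym_integral G (dF F x) α β (dF_int F G x) iα iβ
  have Iα : ∫ y, α y ∂G = e + C * W.real (Ioi A) + C * F.real (Ioi (A / K)) + C * G.real (Ioi L) := by
    rw [hα, integral_add iα2 ((ind_int G L).const_mul C), integral_add iα1 (integrable_const _),
      integral_add (integrable_const _) ((dF_int F G A).const_mul C), integral_const_mul C (dF F A), integral_const_mul C ((Ioi L).indicator 1),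
      ind_integral, ← prodLaw_tail F G hG A hA.le]
    simp [hW]
  have Iβ : ∫ y, β y ∂G = G.real (Ioi (b * x)) + F.real (Ioi (x / (2 * L))) * G.real (Ioi K) := by
    rw [hβ, integral_add (ind_int G _) ((ind_int G K).const_mul _), integral_const_mul, ind_integral, ind_integral]
  have hmain : (W.prod W).real (bothSet A x) ≤ 2 * ((∫ y, dF F x y ∂G) * (∫ y, α y ∂G) + ∫ y, β y ∂G) := by
    rw [hW, four_fold F G _ (bothSet_meas A x), ← hs]
    have hGG : ∀ᵐ q ∂(G.prod G), 0 ≤ q.1 ∧ 0 ≤ q.2 := by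
      have h1 : ∀ᵐ q ∂(G.prod G), 0 ≤ q.1 := Measure.quasiMeasurePreserving_fst.ae hG
      have h2 : ∀ᵐ q ∂(G.prod G), 0 ≤ q.2 := Measure.quasiMeasurePreserving_snd.ae hG
      exact h1.and h2
    refine integral_mono_of_nonneg (Eventually.of_forall fun q => measureReal_nonneg) hi ?_
    have hi0 : ∀ (s : Set ℝ) (y : ℝ), 0 ≤ s.indicator (1 : ℝ → ℝ) y := fun s y =>
      indicator_nonneg (fun _ _ => by simp) y
    have hφ : ∀ y1 y2, 0 ≤ dF F x y2 * α y1 + β y2 := by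
      intro y1 y2
      have := dF_nonneg F x y2
      have := dF_nonneg F A y1
      have := hi0 (Ioi L) y1
      have := hi0 (Ioi (b * x)) y2
      have := hi0 (Ioi K) y2
      simp only [hα, hβ]
      positivity
    filter_upwards [hGG] with q hq
    have hh1 : ∀ u ≥ u0, (F.prod F).real (bothSet a0 u) ≤ e * F.real (Ioi u) :=
      fun u hu => (hu1 u ((le_max_left _ _).trans hu)).1
    have hh2 : ∀ u ≥ u0, F.real (Ioi (u - a0)) ≤ C * F.real (Ioi u) :=
      fun u hu => (hu1 u ((le_max_left _ _).trans hu)).2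
    have key : ∀ y1 y2, 0 < y1 → y1 ≤ y2 → (F.prod F).real (wSet A x y1 y2) ≤ dF F x y2 * α y1 + β y2 :=
      fun y1 y2 h1 h2 => pt_bound F e a0 C u0 b K L A x y1 y2 ha0 hC hbpos hL hA hx0 hepos hh1 hh2 hb1 hb2 h1 h2
    change (F.prod F).real (wSet A x q.1 q.2) ≤ _
    have p1 := hφ q.1 q.2
    have p2 := hφ q.2 q.1
    have hempty : ∀ y1 y2 : ℝ, y1 = 0 → wSet A x y1 y2 = ∅ := by
      intro y1 y2 h0
      ext p
      simp only [wSet, bothSet, mem_ofPred_eq, mem_empty_iff_false, iff_false, h0]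
      rintro ⟨_, h, _⟩
      simp at h; linarith
    rcases hq.1.eq_or_lt with h | h
    · rw [hempty _ _ h.symm]; simp; linarith
    rcases hq.2.eq_or_lt with h' | h'
    · rw [wSet_swap, hempty _ _ h'.symm]; simp; linarith
    rcases le_total q.1 q.2 with hle | hle
    · have := key _ _ h hle; linarith
    · rw [wSet_swap]; have := key _ _ h' hle; linarith
  refine hmain.trans ?_
  rw [Iα, Iβ, ← prodLaw_tail F G hG x hx0.le, ← hW]
  have hlow := prodLaw_lower F G x (2 * L) hx0.le (by positivity)
  rw [← hW] at hlow
  have t1 : C * W.real (Ioi A) ≤ e := by rw [le_div_iff₀ hC] at hA1; linarith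
  have t2 : C * F.real (Ioi (A / K)) ≤ e := by rw [le_div_iff₀ hC] at hA2'; linarith
  have t3 : C * G.real (Ioi L) ≤ e := by rw [le_div_iff₀ hC] at hL1; linarith
  have t4 : F.real (Ioi (x / (2 * L))) * G.real (Ioi K) ≤ e * W.real (Ioi x) := by
    calc F.real (Ioi (x / (2 * L))) * G.real (Ioi K) ≤ F.real (Ioi (x / (2 * L))) * (e * G.real (Ioi (2 * L))) := by
          gcongr
      _ = e * (F.real (Ioi (x / (2 * L))) * G.real (Ioi (2 * L))) := by ring
      _ ≤ _ := by gcongr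
  have t5 : W.real (Ioi x) * (e + C * W.real (Ioi A) + C * F.real (Ioi (A / K)) + C * G.real (Ioi L)) ≤
      W.real (Ioi x) * (4 * e) := by
    gcongr; linarith
  have : ε = 12 * e := by rw [he]; ring
  rw [this]
  linarith

end indep3


section lstep

/-- limiting density factor -/
def hDens (G : Measure ℝ) (θ : ℝ) (y : ℝ) : ℝ := 1 + θ * (1 - midTail G y)

lemma hDens_meas (G : Measure ℝ) [IsProbabilityMeasure G] (θ : ℝ) : Measurable (hDens G θ) := by
  have := midTail_meas G
  unfold hDens
  fun_prop

lemma hDens_bounds (G : Measure ℝ) [IsProbabilityMeasure G] (θ : ℝ) (y : ℝ) :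
    1 - |θ| ≤ hDens G θ y ∧ hDens G θ y ≤ 1 + |θ| := by
  have h1 := abs_one_sub_midTail G y
  have : |θ * (1 - midTail G y)| ≤ |θ| := by
    rw [abs_mul]; nlinarith [abs_nonneg θ]
  rw [abs_le] at this
  unfold hDens
  constructor <;> linarith [this.1, this.2]

lemma withDensity_real {α : Type*} [MeasurableSpace α] (μ : Measure α) [IsProbabilityMeasure μ] (ρ : α → ℝ) (hρ : Measurable ρ) (C : ℝ)
    (h0 : ∀ p, 0 ≤ ρ p) (h1 : ∀ p, ρ p ≤ C) (S : Set α) (hS : MeasurableSet S) :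
    IntegrableOn ρ S μ ∧ (μ.withDensity (fun p => ENNReal.ofReal (ρ p))).real S = ∫ p in S, ρ p ∂μ := by
  have hi : IntegrableOn ρ S μ := (bdd_int μ ρ hρ C (fun p => by rw [abs_of_nonneg (h0 p)]; exact h1 p)).integrableOn
  refine ⟨hi, ?_⟩
  rw [measureReal_def, withDensity_apply _ hS, ← ofReal_integral_eq_lintegral_ofReal hi (Eventually.of_forall h0),
    ENNReal.toReal_ofReal (integral_nonneg h0)]

lemma dens_cmp {α : Type*} [MeasurableSpace α] (μ : Measure α) [IsProbabilityMeasure μ] (ρ h : α → ℝ) (hρ : Measurable ρ) (hh : Measurable h) (C : ℝ)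
    (h0 : ∀ p, 0 ≤ ρ p) (h1 : ∀ p, ρ p ≤ C) (h0' : ∀ p, 0 ≤ h p) (h1' : ∀ p, h p ≤ C)
    (S : Set α) (hS : MeasurableSet S) (c : ℝ) (hc : ∀ p ∈ S, ρ p ≤ c * h p) :
    (μ.withDensity (fun p => ENNReal.ofReal (ρ p))).real S ≤ c * (μ.withDensity (fun p => ENNReal.ofReal (h p))).real S := by
  obtain ⟨i1, e1⟩ := withDensity_real μ ρ hρ C h0 h1 S hS
  obtain ⟨i2, e2⟩ := withDensity_real μ h hh C h0' h1' S hS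
  rw [e1, e2, ← integral_const_mul]
  exact setIntegral_mono_on i1 (i2.const_mul c) hS hc

lemma midTail_small (F : Measure ℝ) [IsProbabilityMeasure F] (η : ℝ) (hη : 0 < η) :
    ∃ u0, ∀ v ≥ u0, midTail F v ≤ η := by
  obtain ⟨u, hu⟩ := eventually_atTop.1 ((tail_tendsto_zero F).eventually_lt_const (half_pos hη))
  refine ⟨u + 1, fun v hv => ?_⟩
  have h1 := hu v (by linarith)
  have h2 := hu (v - 1) (by linarith)
  have h3 : F.real (Ici v) ≤ F.real (Ioi (v - 1)) := measureReal_mono (fun z hz => by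
    simp only [mem_Ici, mem_Ioi] at *; linarith)
  unfold midTail
  linarith

lemma fgm_cmp (F G : Measure ℝ) [IsProbabilityMeasure F] [IsProbabilityMeasure G] (θ : ℝ) (hθ : |θ| < 1)
    (η : ℝ) (hη : 0 < η) : ∃ u0, ∀ p : ℝ × ℝ, u0 ≤ p.1 →
      (1 - η) * hDens G θ p.2 ≤ fgmDens F G θ p ∧ fgmDens F G θ p ≤ (1 + η) * hDens G θ p.2 := by
  obtain ⟨u0, hu⟩ := midTail_small F (η * (1 - |θ|)) (mul_pos hη (by linarith))
  refine ⟨u0, fun p hp => ?_⟩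
  have h1 := hu _ hp
  have h2 := (hDens_bounds G θ p.2).1
  have h3 : |fgmDens F G θ p - hDens G θ p.2| ≤ η * (1 - |θ|) := by
    have : fgmDens F G θ p - hDens G θ p.2 = - (midTail F p.1 * (θ * (1 - midTail G p.2))) := by
      unfold fgmDens hDens; ring
    rw [this, abs_neg, abs_mul, abs_of_nonneg (midTail_nonneg F _), abs_mul]
    have h4 := abs_one_sub_midTail G p.2
    have : |θ| * |1 - midTail G p.2| ≤ 1 := mul_le_one₀ hθ.le (abs_nonneg _) h4
    have h5 := midTail_nonneg F p.1
    nlinarith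
  have h4 : η * (1 - |θ|) ≤ η * hDens G θ p.2 := by gcongr
  rw [abs_le] at h3
  constructor <;> nlinarith [h3.1, h3.2]

lemma section_fin (F G : Measure ℝ) [IsFiniteMeasure F] [IsFiniteMeasure G]
    (S : Set (ℝ × ℝ)) (hS : MeasurableSet S) :
    (F.prod G).real S = ∫ y, F.real ((fun v => (v, y)) ⁻¹' S) ∂G ∧
    Integrable (fun y => F.real ((fun v => (v, y)) ⁻¹' S)) G := by
  constructor
  · rw [measureReal_def, Measure.prod_apply_symm hS, ← integral_toReal]
    · rfl
    · exact (measurable_measure_prodMk_right hS).aemeasurable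
    · exact Eventually.of_forall (fun x => measure_lt_top _ _)
  · refine Integrable.of_bound (C := F.real univ)
      (measurable_measure_prodMk_right hS).ennreal_toReal.aestronglyMeasurable
      (Eventually.of_forall fun y => ?_)
    rw [Real.norm_eq_abs, abs_of_nonneg measureReal_nonneg]
    exact measureReal_mono (subset_univ _)

/-- middle region -/
def midSet (M B x : ℝ) : Set (ℝ × ℝ) := {p | x < p.1 * p.2 ∧ M < p.2 ∧ p.2 ≤ B}

lemma midSet_meas (M B x : ℝ) : MeasurableSet (midSet M B x) :=
  (measurableSet_lt measurable_const mul_meas).inter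
    ((measurableSet_lt measurable_const measurable_snd).inter
      (measurableSet_le measurable_snd measurable_const))

lemma midSet_section (M B x y : ℝ) (hM : 0 < M) (h : M < y ∧ y ≤ B) :
    (fun v => (v, y)) ⁻¹' (midSet M B x) = Ioi (x / y) := by
  ext v
  have hy : 0 < y := hM.trans h.1
  simp only [midSet, mem_preimage, mem_ofPred_eq, mem_Ioi, h.1, h.2, and_true, div_lt_iff₀ hy]

lemma midSet_section' (M B x y : ℝ) (h : ¬ (M < y ∧ y ≤ B)) :
    (fun v => (v, y)) ⁻¹' (midSet M B x) = ∅ := by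
  ext v
  simp only [midSet, mem_preimage, mem_ofPred_eq, mem_empty_iff_false, iff_false]
  tauto

lemma mid_upper (F G : Measure ℝ) [IsProbabilityMeasure F] [IsFiniteMeasure G] (M b t x c u0 : ℝ)
    (hM : 0 < M) (ht : 0 < t) (hx : 0 < x) (hu0 : 0 < u0) (hbu : b * u0 ≤ 1)
    (h : ∀ u ≥ u0, F.real (Ioi (u - t / M)) ≤ c * F.real (Ioi u)) :
    (F.prod G).real (midSet M (b * x) (x - t)) ≤ c * (F.prod G).real (midSet M (b * x) x) := by
  obtain ⟨e1, i1⟩ := section_fin F G _ (midSet_meas M (b * x) (x - t))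
  obtain ⟨e2, i2⟩ := section_fin F G _ (midSet_meas M (b * x) x)
  rw [e1, e2, ← integral_const_mul]
  refine integral_mono i1 (i2.const_mul c) fun y => ?_
  by_cases hy : M < y ∧ y ≤ b * x
  · simp only [midSet_section M _ _ y hM hy]
    have hy0 : 0 < y := hM.trans hy.1
    refine (real_tail_anti F ?_).trans (h (x / y) ?_)
    · rw [sub_div]
      have : t / y ≤ t / M := by gcongr; exact hy.1.le
      linarith
    · rw [ge_iff_le, le_div_iff₀ hy0]
      calc u0 * y ≤ u0 * (b * x) := by gcongr; exact hy.2
        _ = (b * u0) * x := by ring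
        _ ≤ 1 * x := by gcongr
        _ = x := one_mul x
  · simp only [midSet_section' M _ _ y hy]; simp

lemma mid_lower (F G : Measure ℝ) [IsProbabilityMeasure F] [IsFiniteMeasure G] (M b t x c u0 : ℝ)
    (hM : 0 < M) (hx : 0 < x) (hu0 : 0 < u0) (hbu : b * u0 ≤ 1)
    (h : ∀ᵐ y ∂G, 0 < y → ∀ u ≥ u0, c * F.real (Ioi u) ≤ F.real (Ioi (u - t / y))) :
    c * (F.prod G).real (midSet M (b * x) x) ≤ (F.prod G).real (midSet M (b * x) (x - t)) := by
  obtain ⟨e1, i1⟩ := section_fin F G _ (midSet_meas M (b * x) (x - t))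
  obtain ⟨e2, i2⟩ := section_fin F G _ (midSet_meas M (b * x) x)
  rw [e1, e2, ← integral_const_mul]
  refine integral_mono_ae (i2.const_mul c) i1 ?_
  filter_upwards [h] with y hyy
  by_cases hy : M < y ∧ y ≤ b * x
  · simp only [midSet_section M _ _ y hM hy]
    have hy0 : 0 < y := hM.trans hy.1
    rw [sub_div]
    refine hyy hy0 (x / y) ?_
    · rw [ge_iff_le, le_div_iff₀ hy0]
      calc u0 * y ≤ u0 * (b * x) := by gcongr; exact hy.2
        _ = (b * u0) * x := by ring
        _ ≤ 1 * x := by gcongr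
        _ = x := one_mul x
  · simp only [midSet_section' M _ _ y hy]; simp

/-- the FGM joint law -/
def fgmLaw (F G : Measure ℝ) (θ : ℝ) : Measure (ℝ × ℝ) :=
  (F.prod G).withDensity (fun p => ENNReal.ofReal (fgmDens F G θ p))

/-- tilted law of the multiplier -/
def tiltLaw (G : Measure ℝ) (θ : ℝ) : Measure ℝ := G.withDensity (fun y => ENNReal.ofReal (hDens G θ y))

instance tiltLaw_fin (G : Measure ℝ) [IsProbabilityMeasure G] (θ : ℝ) : IsFiniteMeasure (tiltLaw G θ) := by
  unfold tiltLaw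
  apply isFiniteMeasure_withDensity_ofReal
  refine Integrable.hasFiniteIntegral (bdd_int G _ (hDens_meas G θ) (1 + |θ|) fun y => ?_)
  have := hDens_bounds G θ y
  rw [abs_le]
  constructor <;> linarith [this.1, this.2, abs_nonneg θ]

lemma fgmLaw_upper (F G : Measure ℝ) [IsProbabilityMeasure F] [IsProbabilityMeasure G] (θ : ℝ) :
    fgmLaw F G θ ≤ ENNReal.ofReal (1 + |θ|) • (F.prod G) := by
  unfold fgmLaw
  rw [← withDensity_const]
  refine withDensity_mono (Eventually.of_forall fun p => ENNReal.ofReal_le_ofReal (fgmDens_le F G θ p))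

lemma fgmLaw_upper_real (F G : Measure ℝ) [IsProbabilityMeasure F] [IsProbabilityMeasure G] (θ : ℝ) (S : Set (ℝ × ℝ)) :
    (fgmLaw F G θ).real S ≤ (1 + |θ|) * (F.prod G).real S := by
  have h := fgmLaw_upper F G θ S
  have h2 := ENNReal.toReal_mono (by
    simp only [Measure.smul_apply, smul_eq_mul]
    exact ENNReal.mul_ne_top ENNReal.ofReal_ne_top (measure_ne_top _ _)) h
  have e : (1 + |θ|) * (F.prod G).real S = ((ENNReal.ofReal (1 + |θ|) • (F.prod G)) S).toReal := by
    simp only [Measure.smul_apply, smul_eq_mul, ENNReal.toReal_mul]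
    rw [ENNReal.toReal_ofReal (by positivity)]; rfl
  rw [e]; exact h2

lemma fgmLaw_lower_real (F G : Measure ℝ) [IsProbabilityMeasure F] [IsProbabilityMeasure G] (θ : ℝ) (hθ : |θ| < 1)
    (S : Set (ℝ × ℝ)) (hS : MeasurableSet S) :
    (1 - |θ|) * (F.prod G).real S ≤ (fgmLaw F G θ).real S := by
  obtain ⟨i, e⟩ := withDensity_real (F.prod G) (fgmDens F G θ) (fgmDens_meas F G θ) (1 + |θ|)
    (fun p => by linarith [fgmDens_ge F G θ p]) (fgmDens_le F G θ) S hS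
  unfold fgmLaw
  rw [e]
  have : (1 - |θ|) * (F.prod G).real S = ∫ p in S, (1 - |θ|) ∂(F.prod G) := by simp [mul_comm]
  rw [this]
  exact setIntegral_mono_on (integrable_const _).integrableOn i hS (fun p _ => fgmDens_ge F G θ p)

lemma fgm_tilt (F G : Measure ℝ) [IsProbabilityMeasure F] [IsProbabilityMeasure G] (θ : ℝ) (hθ : |θ| < 1)
    (η : ℝ) (hη : 0 < η) (hη1 : η < 1) : ∃ u0, ∀ S : Set (ℝ × ℝ), MeasurableSet S → (∀ p ∈ S, u0 ≤ p.1) →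
      (1 - η) * (F.prod (tiltLaw G θ)).real S ≤ (fgmLaw F G θ).real S ∧
      (fgmLaw F G θ).real S ≤ (1 + η) * (F.prod (tiltLaw G θ)).real S := by
  obtain ⟨u0, hu⟩ := fgm_cmp F G θ hθ η hη
  refine ⟨u0, fun S hS hp => ?_⟩
  have e : F.prod (tiltLaw G θ) = (F.prod G).withDensity (fun p => ENNReal.ofReal (hDens G θ p.2)) := by
    unfold tiltLaw
    rw [prod_withDensity_right (hDens_meas G θ).ennreal_ofReal]
  rw [e]
  have m1 := fgmDens_meas F G θ
  have m2 : Measurable (fun p : ℝ × ℝ => hDens G θ p.2) := (hDens_meas G θ).comp measurable_snd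
  have a1 : ∀ p, 0 ≤ fgmDens F G θ p := fun p => by linarith [fgmDens_ge F G θ p]
  have a2 : ∀ p : ℝ × ℝ, 0 ≤ hDens G θ p.2 := fun p => by linarith [(hDens_bounds G θ p.2).1]
  have b1 := fgmDens_le F G θ
  have b2 : ∀ p : ℝ × ℝ, hDens G θ p.2 ≤ 1 + |θ| := fun p => (hDens_bounds G θ p.2).2
  constructor
  · have := dens_cmp (F.prod G) _ _ m2 m1 (1 + |θ|) a2 b2 a1 b1 S hS (1 / (1 - η)) (fun p hpS => by
      rw [one_div, inv_mul_eq_div, le_div_iff₀ (by linarith)]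
      linarith [(hu p (hp p hpS)).1])
    rw [one_div, inv_mul_eq_div, le_div_iff₀ (by linarith)] at this
    unfold fgmLaw
    linarith
  · exact dens_cmp (F.prod G) _ _ m1 m2 (1 + |θ|) a1 b1 a2 b2 S hS (1 + η) (fun p hpS => (hu p (hp p hpS)).2)

end lstep


section lcore

/-- product tail set -/
def mulSet (x : ℝ) : Set (ℝ × ℝ) := {p | x < p.1 * p.2}

lemma mulSet_meas (x : ℝ) : MeasurableSet (mulSet x) := measurableSet_lt measurable_const mul_meas

lemma low_bound (F G : Measure ℝ) [IsProbabilityMeasure F] [IsProbabilityMeasure G] (θ : ℝ) (hθ : |θ| < 1)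
    (hG : ∀ᵐ y ∂G, 0 ≤ y) (M x : ℝ) (hM : 0 < M) (hx : 0 ≤ x) :
    (fgmLaw F G θ).real {p | x < p.1 * p.2 ∧ p.2 ≤ M} ≤ 2 * (F.real (Ioi (x / M)) * G.real (Ioc 0 M)) := by
  refine (fgmLaw_upper_real F G θ _).trans ?_
  have h1 : (F.prod G).real {p | x < p.1 * p.2 ∧ p.2 ≤ M} ≤ (F.prod G).real (Ioi (x / M) ×ˢ Ioc 0 M) := by
    refine ENNReal.toReal_mono (measure_ne_top _ _) (measure_mono_ae ?_)
    have : ∀ᵐ p ∂(F.prod G), 0 ≤ p.2 := Measure.quasiMeasurePreserving_snd.ae hG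
    filter_upwards [this] with p hp hpS
    obtain ⟨h1, h2⟩ := hpS
    have hv : 0 < p.1 * p.2 := lt_of_le_of_lt hx h1
    have hy : 0 < p.2 := lt_of_le_of_ne hp (fun h => by rw [← h] at hv; simp at hv)
    have hv1 : 0 < p.1 := by
      by_contra hc; push Not at hc; nlinarith
    refine ⟨?_, hy, h2⟩
    rw [mem_Ioi, div_lt_iff₀ hM]
    nlinarith
  rw [measureReal_prod_prod] at h1
  have := mul_nonneg (measureReal_nonneg (μ := F) (s := Ioi (x / M))) (measureReal_nonneg (μ := G) (s := Ioc 0 M))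
  have h3 : 0 ≤ (F.prod G).real {p | x < p.1 * p.2 ∧ p.2 ≤ M} := measureReal_nonneg
  nlinarith [abs_nonneg θ]

lemma high_bound (F G : Measure ℝ) [IsProbabilityMeasure F] [IsProbabilityMeasure G] (θ : ℝ) (hθ : |θ| < 1)
    (a : ℝ) :
    (fgmLaw F G θ).real {p | a < p.2} ≤ 2 * G.real (Ioi a) := by
  refine (fgmLaw_upper_real F G θ _).trans ?_
  have h1 : {p : ℝ × ℝ | a < p.2} = univ ×ˢ Ioi a := by ext p; simp
  rw [h1, measureReal_prod_prod]
  simp only [probReal_univ, one_mul]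
  have := measureReal_nonneg (μ := G) (s := Ioi a)
  nlinarith

instance fgmLaw_fin (F G : Measure ℝ) [IsProbabilityMeasure F] [IsProbabilityMeasure G] (θ : ℝ) :
    IsFiniteMeasure (fgmLaw F G θ) := by
  constructor
  refine lt_of_le_of_lt (fgmLaw_upper F G θ univ) ?_
  simp only [Measure.smul_apply, smul_eq_mul, measure_univ, mul_one]
  exact ENNReal.ofReal_lt_top

lemma L_core (F G : Measure ℝ) [IsProbabilityMeasure F] [IsProbabilityMeasure G] (θ : ℝ) (hθ : |θ| < 1)
    (hG : ∀ᵐ y ∂G, 0 ≤ y) (t η M cU cL : ℝ) (ht : 0 < t) (hη : 0 < η) (hη1 : η < 1) (hM : 0 < M)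
    (hcU : 0 ≤ cU) (hcL : 0 ≤ cL)
    (hU : ∀ᶠ u in atTop, F.real (Ioi (u - t / M)) ≤ cU * F.real (Ioi u))
    (hL : ∃ u0, ∀ᵐ y ∂G, 0 < y → ∀ u ≥ u0, cL * F.real (Ioi u) ≤ F.real (Ioi (u - t / y)))
    (hsmall : ∀ᶠ x in atTop, F.real (Ioi ((x - t) / M)) * G.real (Ioc 0 M) ≤ η * (fgmLaw F G θ).real (mulSet x))
    (hA2 : ∀ b > 0, ∀ ε > 0, ∀ᶠ x in atTop, G.real (Ioi (b * x)) ≤ ε * (fgmLaw F G θ).real (mulSet x)) :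
    ∀ᶠ x in atTop, (fgmLaw F G θ).real (mulSet (x - t)) ≤ (4 * η + (1 + η) * cU / (1 - η)) * (fgmLaw F G θ).real (mulSet x) ∧
      ((1 - η) * cL / (1 + η) * (1 - 4 * η)) * (fgmLaw F G θ).real (mulSet x) ≤ (fgmLaw F G θ).real (mulSet (x - t)) := by
  obtain ⟨uU, hU⟩ := eventually_atTop.1 hU
  obtain ⟨uL, hL⟩ := hL
  obtain ⟨uT, hT⟩ := fgm_tilt F G θ hθ η hη hη1
  set J := fgmLaw F G θ with hJ
  set N := F.prod (tiltLaw G θ) with hN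
  set u1 := max (max uU uL) (max uT 1) with hu1
  have q1 : uU ≤ u1 := by simp [hu1]
  have q2 : uL ≤ u1 := by simp [hu1]
  have q3 : uT ≤ u1 := by simp [hu1]
  have q4 : 1 ≤ u1 := by simp [hu1]
  have u1pos : 0 < u1 := by linarith
  set b := 1 / (2 * u1) with hb
  have hbpos : 0 < b := by positivity
  have hbu : b * u1 ≤ 1 := by
    rw [hb]; field_simp; norm_num
  have hb2 : b * u1 = 1 / 2 := by rw [hb]; field_simp
  filter_upwards [hsmall, hA2 b hbpos η hη, eventually_ge_atTop (2 * t), eventually_gt_atTop 0] with x h1 h2 h3 hx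
  have mem1 : ∀ z, x / 2 ≤ z → ∀ p ∈ midSet M (b * x) z, uT ≤ p.1 := by
    rintro z hz p ⟨a1, a2, a3⟩
    refine q3.trans ?_
    by_contra hc
    push Not at hc
    have : p.1 * p.2 ≤ u1 * (b * x) := by
      calc p.1 * p.2 ≤ u1 * p.2 := by
            have : 0 < p.2 := hM.trans a2
            gcongr
        _ ≤ _ := by gcongr
    have e : u1 * (b * x) = x / 2 := by linear_combination x * hb2
    linarith
  have T1 := hT _ (midSet_meas M (b * x) (x - t)) (mem1 _ (by linarith))
  have T2 := hT _ (midSet_meas M (b * x) x) (mem1 _ (by linarith))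
  have U1 := mid_upper F (tiltLaw G θ) M b t x cU u1 hM ht hx u1pos hbu (fun u hu => hU u (q1.trans hu))
  have L1 := mid_lower F (tiltLaw G θ) M b t x cL u1 hM hx u1pos hbu (by
    have hac : tiltLaw G θ ≪ G := withDensity_absolutelyContinuous _ _
    filter_upwards [hac.ae_le hL] with y hy hy0 u hu using hy hy0 u (q2.trans hu))
  have split : ∀ z, x - t ≤ z → J.real (mulSet z) ≤ 4 * η * J.real (mulSet x) + J.real (midSet M (b * x) z) := by
    intro z hz
    have sub : mulSet z ⊆ ({p | x - t < p.1 * p.2 ∧ p.2 ≤ M} ∪ {p | b * x < p.2}) ∪ midSet M (b * x) z := by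
      intro p hp
      have hp' : z < p.1 * p.2 := hp
      by_cases c1 : p.2 ≤ M
      · exact Or.inl (Or.inl ⟨by linarith, c1⟩)
      · by_cases c2 : b * x < p.2
        · exact Or.inl (Or.inr c2)
        · exact Or.inr ⟨hp', not_le.1 c1, not_lt.1 c2⟩
    have a1 := low_bound F G θ hθ hG M (x - t) hM (by linarith)
    have a2 := high_bound F G θ hθ (b * x)
    rw [← hJ] at a1 a2
    calc J.real (mulSet z) ≤ _ := measureReal_mono sub
      _ ≤ _ := measureReal_union_le _ _
      _ ≤ (J.real {p | x - t < p.1 * p.2 ∧ p.2 ≤ M} + J.real {p | b * x < p.2}) + J.real (midSet M (b * x) z) := by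
          gcongr; exact measureReal_union_le _ _
      _ ≤ _ := by linarith
  have S1 := split (x - t) le_rfl
  have S2 := split x (by linarith)
  have m1 : J.real (midSet M (b * x) x) ≤ J.real (mulSet x) := measureReal_mono (fun p hp => hp.1)
  have m2 : J.real (midSet M (b * x) (x - t)) ≤ J.real (mulSet (x - t)) := measureReal_mono (fun p hp => hp.1)
  have p1 : (0:ℝ) < 1 - η := by linarith
  have p2 : (0:ℝ) < 1 + η := by linarith
  constructor
  · have k1 : N.real (midSet M (b * x) x) ≤ J.real (mulSet x) / (1 - η) := by
      rw [le_div_iff₀ p1]; linarith [T2.1]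
    have : J.real (midSet M (b * x) (x - t)) ≤ (1 + η) * (cU * (J.real (mulSet x) / (1 - η))) := by
      refine T1.2.trans ?_
      gcongr
      refine U1.trans ?_
      gcongr
    have e : (4 * η + (1 + η) * cU / (1 - η)) * J.real (mulSet x) = 4 * η * J.real (mulSet x) + (1 + η) * (cU * (J.real (mulSet x) / (1 - η))) := by ring
    rw [e]; linarith
  · have k1 : (1 - 4 * η) * J.real (mulSet x) / (1 + η) ≤ N.real (midSet M (b * x) x) := by
      rw [div_le_iff₀ p2]; linarith [T2.2]
    calc _ = (1 - η) * (cL * ((1 - 4 * η) * J.real (mulSet x) / (1 + η))) := by ring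
      _ ≤ (1 - η) * (cL * N.real (midSet M (b * x) x)) := by gcongr
      _ ≤ (1 - η) * N.real (midSet M (b * x) (x - t)) := by gcongr
      _ ≤ _ := T1.1
      _ ≤ _ := m2

end lcore


section llim

lemma H_lower (F G : Measure ℝ) [IsProbabilityMeasure F] [IsProbabilityMeasure G] (θ : ℝ) (hθ : |θ| < 1)
    (x y : ℝ) (hx : 0 ≤ x) (hy : 0 < y) :
    (1 - |θ|) * (F.real (Ioi (x / y)) * G.real (Ioi y)) ≤ (fgmLaw F G θ).real (mulSet x) := by
  refine le_trans ?_ (fgmLaw_lower_real F G θ hθ _ (mulSet_meas x))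
  have h := prodLaw_lower F G x y hx hy
  have e : (prodLaw F G).real (Ioi x) = (F.prod G).real (mulSet x) := by
    unfold prodLaw
    rw [map_measureReal_apply mul_meas measurableSet_Ioi]; rfl
  rw [e] at h
  have : 0 < 1 - |θ| := by linarith
  gcongr

lemma small_gzero (F G : Measure ℝ) [IsProbabilityMeasure F] [IsProbabilityMeasure G] (θ : ℝ) (hθ : |θ| < 1)
    (t η y0 : ℝ) (ht : 0 < t) (hη : 0 < η) (hy0 : 0 < y0) (hGy : 0 < G.real (Ioi y0)) :
    ∃ M > 0, ∀ᶠ x in atTop, F.real (Ioi ((x - t) / M)) * G.real (Ioc 0 M) ≤ η * (fgmLaw F G θ).real (mulSet x) := by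
  have hθ' : 0 < 1 - |θ| := by linarith
  have h1 : Tendsto (G ∘ (fun r : ℝ => Ioc (0:ℝ) r)) (nhdsWithin 0 (Ioi 0)) (nhds (G (⋂ r > (0:ℝ), Ioc 0 r))) :=
    tendsto_measure_biInter_gt (fun r _ => measurableSet_Ioc.nullMeasurableSet)
      (fun i j _ hij => Ioc_subset_Ioc_right hij) ⟨1, by norm_num, measure_ne_top _ _⟩
  have h2 : (⋂ r > (0:ℝ), Ioc (0:ℝ) r) = ∅ := by
    ext z
    simp only [mem_iInter, mem_Ioc, mem_empty_iff_false, iff_false]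
    intro h
    have a := (h 1 (by norm_num)).1
    have b := (h (z / 2) (by positivity)).2
    linarith
  rw [h2, measure_empty] at h1
  have h3 : Tendsto (fun r : ℝ => G.real (Ioc 0 r)) (nhdsWithin 0 (Ioi 0)) (nhds 0) := by
    have := (ENNReal.tendsto_toReal ENNReal.zero_ne_top).comp h1
    rw [ENNReal.toReal_zero] at this
    exact this
  have h4 := h3.eventually_le_const (show 0 < η * ((1 - |θ|) * G.real (Ioi y0)) by positivity)
  have h5 : ∀ᶠ r : ℝ in nhdsWithin 0 (Ioi 0), r < y0 / 2 :=
    (tendsto_id.mono_right nhdsWithin_le_nhds).eventually_lt_const (by positivity)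
  obtain ⟨M, hM1, hM2, hM3⟩ := (h4.and (h5.and self_mem_nhdsWithin)).exists
  have hM3 : 0 < M := hM3
  refine ⟨M, hM3, ?_⟩
  filter_upwards [eventually_ge_atTop (2 * t)] with x hx
  have h6 := H_lower F G θ hθ x y0 (by linarith) hy0
  have h7 : F.real (Ioi ((x - t) / M)) ≤ F.real (Ioi (x / y0)) := by
    apply real_tail_anti
    rw [div_le_div_iff₀ hy0 hM3]
    nlinarith
  calc _ ≤ F.real (Ioi (x / y0)) * (η * ((1 - |θ|) * G.real (Ioi y0))) := by gcongr
    _ = η * ((1 - |θ|) * (F.real (Ioi (x / y0)) * G.real (Ioi y0))) := by ring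
    _ ≤ _ := by gcongr

lemma small_pos (F G : Measure ℝ) [IsProbabilityMeasure F] [IsProbabilityMeasure G] (θ : ℝ) (hθ : |θ| < 1)
    (γ : ℝ) (hγ : 0 < γ) (hpos : ∀ x, 0 < F.real (Ioi x))
    (hr : ∀ t, Tendsto (fun x => F.real (Ioi (x - t)) / F.real (Ioi x)) atTop (nhds (Real.exp (γ * t))))
    (t η y0 M : ℝ) (hη : 0 < η) (hM : 0 < M) (hMy : M < y0) (hGy : 0 < G.real (Ioi y0)) :
    ∀ᶠ x in atTop, F.real (Ioi ((x - t) / M)) * G.real (Ioc 0 M) ≤ η * (fgmLaw F G θ).real (mulSet x) := by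
  have hθ' : 0 < 1 - |θ| := by linarith
  have hy0 : 0 < y0 := hM.trans hMy
  set ε := η * ((1 - |θ|) * G.real (Ioi y0)) with hε
  have hεp : 0 < ε := by positivity
  have hexp : Tendsto (fun w : ℝ => Real.exp (γ * w)) atTop atTop :=
    Real.tendsto_exp_atTop.comp (tendsto_id.const_mul_atTop hγ)
  obtain ⟨w, hw⟩ := (hexp.eventually_gt_atTop (1 / ε)).exists
  have h1 := (hr w).eventually_const_le hw
  have h2 : Tendsto (fun x : ℝ => (x - t) / M) atTop atTop :=
    (tendsto_atTop_add_const_right _ (-t) tendsto_id).atTop_div_const hM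
  have hc : 0 < 1 / M - 1 / y0 := by
    have := one_div_lt_one_div_of_lt hM hMy
    linarith
  have h3 : ∀ᶠ x : ℝ in atTop, t / M + w ≤ (1 / M - 1 / y0) * x :=
    (tendsto_id.const_mul_atTop hc).eventually_ge_atTop _
  filter_upwards [h2.eventually h1, h3, eventually_ge_atTop 0] with x hx1 hx2 hx3
  have h6 := H_lower F G θ hθ x y0 hx3 hy0
  have h7 : F.real (Ioi ((x - t) / M - w)) ≤ F.real (Ioi (x / y0)) := by
    apply real_tail_anti
    have : (1 / M - 1 / y0) * x = x / M - x / y0 := by ring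
    rw [sub_div]; linarith
  have h8 : F.real (Ioi ((x - t) / M)) ≤ ε * F.real (Ioi ((x - t) / M - w)) := by
    rw [le_div_iff₀ (hpos _), one_div, inv_mul_le_iff₀ hεp] at hx1
    exact hx1
  have h9 : G.real (Ioc 0 M) ≤ 1 := measureReal_le_one
  calc _ ≤ F.real (Ioi ((x - t) / M)) * 1 := by gcongr
    _ = F.real (Ioi ((x - t) / M)) := mul_one _
    _ ≤ ε * F.real (Ioi (x / y0)) := h8.trans (by gcongr)
    _ = η * ((1 - |θ|) * (F.real (Ioi (x / y0)) * G.real (Ioi y0))) := by rw [hε]; ring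
    _ ≤ _ := by gcongr

lemma L_lim (F G : Measure ℝ) [IsProbabilityMeasure F] [IsProbabilityMeasure G] (θ : ℝ) (hθ : |θ| < 1)
    (hG : ∀ᵐ y ∂G, 0 ≤ y) (γ : ℝ) (hγ : 0 ≤ γ) (hpos : ∀ x, 0 < F.real (Ioi x))
    (hr : ∀ t, Tendsto (fun x => F.real (Ioi (x - t)) / F.real (Ioi x)) atTop (nhds (Real.exp (γ * t))))
    (y0 : ℝ) (hy0 : 0 < y0) (hGy : 0 < G.real (Ioi y0))
    (hA2 : ∀ b > 0, ∀ ε > 0, ∀ᶠ x in atTop, G.real (Ioi (b * x)) ≤ ε * (fgmLaw F G θ).real (mulSet x))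
    (t γ' : ℝ) (ht : 0 < t) (hz : γ = 0 → γ' = 0)
    (hAp : ∀ η > 0, ∃ M > 0, ∃ y1 > M, 0 < G.real (Ioi y1) ∧ Real.exp (γ * (t / M)) ≤ (1 + η) * Real.exp (γ' * t))
    (hLow : ∀ η > 0, ∃ u0, ∀ᵐ y ∂G, 0 < y → ∀ u ≥ u0, (1 - η) * Real.exp (γ' * t) * F.real (Ioi u) ≤ F.real (Ioi (u - t / y))) :
    Tendsto (fun x => (fgmLaw F G θ).real (mulSet (x - t)) / (fgmLaw F G θ).real (mulSet x)) atTop (nhds (Real.exp (γ' * t))) := by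
  set E := Real.exp (γ' * t) with hE
  have hEp : 0 < E := Real.exp_pos _
  set J := fgmLaw F G θ with hJ
  have hJpos : ∀ᶠ x in atTop, 0 < J.real (mulSet x) := by
    filter_upwards [eventually_ge_atTop 0] with x hx
    refine lt_of_lt_of_le ?_ (H_lower F G θ hθ x y0 hx hy0)
    have : 0 < 1 - |θ| := by linarith
    have := hpos (x / y0)
    positivity
  have key : ∀ η, 0 < η → η < 1 → ∀ᶠ x in atTop,
      J.real (mulSet (x - t)) / J.real (mulSet x) ≤ 4 * η + (1 + η) * ((1 + η) * ((1 + η) * E)) / (1 - η) ∧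
      (1 - η) * ((1 - η) * E) / (1 + η) * (1 - 4 * η) ≤ J.real (mulSet (x - t)) / J.real (mulSet x) := by
    intro η hη hη1
    have hM : ∃ M > 0, Real.exp (γ * (t / M)) ≤ (1 + η) * E ∧
        ∀ᶠ x in atTop, F.real (Ioi ((x - t) / M)) * G.real (Ioc 0 M) ≤ η * J.real (mulSet x) := by
      rcases hγ.eq_or_lt with h0 | h0
      · obtain ⟨M, hM, h⟩ := small_gzero F G θ hθ t η y0 ht hη hy0 hGy
        refine ⟨M, hM, ?_, h⟩
        rw [hE, hz h0.symm, ← h0]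
        simp [hη.le]
      · obtain ⟨M, hM, y1, hy1, hg, he⟩ := hAp η hη
        exact ⟨M, hM, he, small_pos F G θ hθ γ h0 hpos hr t η y1 M hη hM hy1 hg⟩
    obtain ⟨M, hM, hMe, hMs⟩ := hM
    have hU : ∀ᶠ u in atTop, F.real (Ioi (u - t / M)) ≤ ((1 + η) * ((1 + η) * E)) * F.real (Ioi u) := by
      have : Real.exp (γ * (t / M)) < (1 + η) * ((1 + η) * E) := by
        have := Real.exp_pos (γ * (t / M))
        nlinarith
      filter_upwards [(hr (t / M)).eventually_le_const this] with u hu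
      rwa [div_le_iff₀ (hpos _)] at hu
    have := L_core F G θ hθ hG t η M _ ((1 - η) * E) ht hη hη1 hM (by positivity)
      (mul_nonneg (by linarith) hEp.le) hU (hLow η hη) hMs hA2
    filter_upwards [this, hJpos] with x hx hp
    rw [div_le_iff₀ hp, le_div_iff₀ hp]
    exact hx
  have cU : Tendsto (fun η : ℝ => 4 * η + (1 + η) * ((1 + η) * ((1 + η) * E)) / (1 - η)) (nhdsWithin 0 (Ioi 0)) (nhds E) := by
    have : ContinuousAt (fun η : ℝ => 4 * η + (1 + η) * ((1 + η) * ((1 + η) * E)) / (1 - η)) 0 := by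
      refine ContinuousAt.add (by fun_prop) (ContinuousAt.div (by fun_prop) (by fun_prop) (by norm_num))
    have h := this.tendsto.mono_left (nhdsWithin_le_nhds (s := Ioi 0))
    simpa using h
  have cL : Tendsto (fun η : ℝ => (1 - η) * ((1 - η) * E) / (1 + η) * (1 - 4 * η)) (nhdsWithin 0 (Ioi 0)) (nhds E) := by
    have : ContinuousAt (fun η : ℝ => (1 - η) * ((1 - η) * E) / (1 + η) * (1 - 4 * η)) 0 := by
      refine ContinuousAt.mul (ContinuousAt.div (by fun_prop) (by fun_prop) (by norm_num)) (by fun_prop)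
    have h := this.tendsto.mono_left (nhdsWithin_le_nhds (s := Ioi 0))
    simpa using h
  have h1 : ∀ᶠ r : ℝ in nhdsWithin 0 (Ioi 0), r < 1 :=
    (tendsto_id.mono_right nhdsWithin_le_nhds).eventually_lt_const (by norm_num)
  rw [tendsto_order]
  constructor
  · intro a ha
    obtain ⟨η, k1, k2, k3⟩ := ((cL.eventually_const_lt ha).and (h1.and self_mem_nhdsWithin)).exists
    filter_upwards [key η k3 k2] with x hx
    exact k1.trans_le hx.2
  · intro a ha
    obtain ⟨η, k1, k2, k3⟩ := ((cU.eventually_lt_const ha).and (h1.and self_mem_nhdsWithin)).exists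
    filter_upwards [key η k3 k2] with x hx
    exact hx.1.trans_lt k1

end llim


section cases_beta

lemma approx_bdd (G : Measure ℝ) (γ β t : ℝ) (hβ : 0 < β) (h : ∀ y < β, 0 < G.real (Ioi y)) :
    ∀ η > 0, ∃ M > 0, ∃ y1 > M, 0 < G.real (Ioi y1) ∧ Real.exp (γ * (t / M)) ≤ (1 + η) * Real.exp (γ / β * t) := by
  intro η hη
  have hc : ContinuousAt (fun M : ℝ => Real.exp (γ * (t / M))) β :=
    Real.continuous_exp.continuousAt.comp
      (continuousAt_const.mul (continuousAt_const.div continuousAt_id hβ.ne'))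
  have h1 := hc.tendsto.mono_left (nhdsWithin_le_nhds (s := Iio β))
  have e : Real.exp (γ * (t / β)) = Real.exp (γ / β * t) := by congr 1; ring
  have h2 : Real.exp (γ * (t / β)) < (1 + η) * Real.exp (γ / β * t) := by
    rw [e]; nlinarith [Real.exp_pos (γ / β * t)]
  have h3 : ∀ᶠ r : ℝ in nhdsWithin β (Iio β), 0 < r :=
    (tendsto_id.mono_right nhdsWithin_le_nhds).eventually_const_lt hβ
  obtain ⟨M, k1, k2, k3⟩ := ((h1.eventually_le_const h2).and (h3.and self_mem_nhdsWithin)).exists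
  have k3 : M < β := k3
  exact ⟨M, k2, (M + β) / 2, by linarith, h _ (by linarith), k1⟩

lemma approx_unb (G : Measure ℝ) (γ t : ℝ) (h : ∀ y, 0 < G.real (Ioi y)) :
    ∀ η > 0, ∃ M > 0, ∃ y1 > M, 0 < G.real (Ioi y1) ∧ Real.exp (γ * (t / M)) ≤ (1 + η) * Real.exp (0 * t) := by
  intro η hη
  have h1 : Tendsto (fun M : ℝ => Real.exp (γ * (t / M))) atTop (nhds (Real.exp (γ * 0))) :=
    (Real.continuous_exp.tendsto _).comp ((tendsto_id.const_div_atTop t).const_mul γ)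
  have h2 : Real.exp (γ * 0) < (1 + η) * Real.exp (0 * t) := by simp [hη]
  obtain ⟨M, k1, k2⟩ := ((h1.eventually_le_const h2).and (eventually_gt_atTop 0)).exists
  exact ⟨M, k2, M + 1, by linarith, h _, k1⟩

lemma low_bdd (F G : Measure ℝ) [IsProbabilityMeasure F] (γ β t : ℝ) (ht : 0 < t)
    (hpos : ∀ x, 0 < F.real (Ioi x))
    (hr : ∀ t, Tendsto (fun x => F.real (Ioi (x - t)) / F.real (Ioi x)) atTop (nhds (Real.exp (γ * t))))
    (h : ∀ᵐ y ∂G, y ≤ β) :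
    ∀ η > 0, ∃ u0, ∀ᵐ y ∂G, 0 < y → ∀ u ≥ u0, (1 - η) * Real.exp (γ / β * t) * F.real (Ioi u) ≤ F.real (Ioi (u - t / y)) := by
  intro η hη
  have e : Real.exp (γ * (t / β)) = Real.exp (γ / β * t) := by congr 1; ring
  have h1 : (1 - η) * Real.exp (γ / β * t) < Real.exp (γ * (t / β)) := by
    rw [e]; nlinarith [Real.exp_pos (γ / β * t)]
  obtain ⟨u0, hu0⟩ := eventually_atTop.1 ((hr (t / β)).eventually_const_le h1)
  refine ⟨u0, ?_⟩
  filter_upwards [h] with y hy hy0 u hu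
  have := hu0 u hu
  rw [le_div_iff₀ (hpos _)] at this
  refine this.trans (real_tail_anti F ?_)
  have : t / β ≤ t / y := by gcongr
  linarith

lemma low_unb (F G : Measure ℝ) [IsProbabilityMeasure F] (t : ℝ) (ht : 0 < t) :
    ∀ η > 0, ∃ u0, ∀ᵐ y ∂G, 0 < y → ∀ u ≥ u0, (1 - η) * Real.exp (0 * t) * F.real (Ioi u) ≤ F.real (Ioi (u - t / y)) := by
  intro η hη
  refine ⟨0, Eventually.of_forall fun y hy0 u hu => ?_⟩
  have h1 : F.real (Ioi u) ≤ F.real (Ioi (u - t / y)) := real_tail_anti F (by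
    have : 0 < t / y := by positivity
    linarith)
  have := measureReal_nonneg (μ := F) (s := Ioi u)
  rw [zero_mul, Real.exp_zero]
  nlinarith

end cases_beta

section sstep

/-- both-bound for the FGM product law -/
lemma fgm_both (F G : Measure ℝ) [IsProbabilityMeasure F] [IsProbabilityMeasure G] (θ : ℝ) (hθ : |θ| < 1)
    (H : Measure ℝ) [IsProbabilityMeasure H] (hH : H = (fgmLaw F G θ).map (fun p => p.1 * p.2))
    (hG : ∀ᵐ y ∂G, 0 ≤ y)
    (hF : ∀ ε > 0, ∃ A > 0, ∀ᶠ u in atTop, (F.prod F).real (bothSet A u) ≤ ε * F.real (Ioi u))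
    (hFL : ∀ a, ∃ C > 0, ∀ᶠ u in atTop, F.real (Ioi (u - a)) ≤ C * F.real (Ioi u))
    (hA2 : ∀ b > 0, ∀ ε > 0, ∀ᶠ x in atTop, G.real (Ioi (b * x)) ≤ ε * H.real (Ioi x)) :
    ∀ ε > 0, ∃ A, ∀ᶠ x in atTop, (H.prod H).real (bothSet A x) ≤ ε * H.real (Ioi x) := by
  intro ε hε
  set W := prodLaw F G with hW
  set c := 1 + |θ| with hc
  have hcp : 0 < c := by positivity
  have hθ' : 0 < 1 - |θ| := by linarith
  have hHW : H ≤ ENNReal.ofReal c • W := by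
    rw [hH, hW, prodLaw, ← Measure.map_smul]
    exact Measure.map_mono (fgmLaw_upper F G θ) mul_meas
  have hHreal : ∀ S, H.real S ≤ c * W.real S := by
    intro S
    have := ENNReal.toReal_mono (by
      simp only [Measure.smul_apply, smul_eq_mul]
      exact ENNReal.mul_ne_top ENNReal.ofReal_ne_top (measure_ne_top _ _)) (hHW S)
    simpa only [measureReal_def, Measure.smul_apply, smul_eq_mul, ENNReal.toReal_mul, ENNReal.toReal_ofReal hcp.le] using this
  have hlow : ∀ x, (1 - |θ|) * W.real (Ioi x) ≤ H.real (Ioi x) := by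
    intro x
    rw [hH, hW, prodLaw, map_measureReal_apply mul_meas measurableSet_Ioi,
      map_measureReal_apply mul_meas measurableSet_Ioi]
    exact fgmLaw_lower_real F G θ hθ _ (mul_meas measurableSet_Ioi)
  have hPP : ∀ S, (H.prod H).real S ≤ c * c * (W.prod W).real S := by
    intro S
    have h1 : H.prod H ≤ (ENNReal.ofReal c * ENNReal.ofReal c) • (W.prod W) := by
      refine (Measure.prod_mono hHW hHW).trans ?_
      rw [Measure.prod_smul_left, Measure.prod_smul_right, smul_smul]
    have := ENNReal.toReal_mono (by
      simp only [Measure.smul_apply, smul_eq_mul]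
      exact ENNReal.mul_ne_top (ENNReal.mul_ne_top ENNReal.ofReal_ne_top ENNReal.ofReal_ne_top) (measure_ne_top _ _)) (h1 S)
    simpa only [measureReal_def, Measure.smul_apply, smul_eq_mul, ENNReal.toReal_mul, ENNReal.toReal_ofReal hcp.le] using this
  have hA2W : ∀ b > 0, ∀ ε > 0, ∀ᶠ x in atTop, G.real (Ioi (b * x)) ≤ ε * W.real (Ioi x) := by
    intro b hb δ hδ
    filter_upwards [hA2 b hb (δ / c) (by positivity)] with x hx
    refine hx.trans ?_
    calc δ / c * H.real (Ioi x) ≤ δ / c * (c * W.real (Ioi x)) := by gcongr; exact hHreal _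
      _ = δ * W.real (Ioi x) := by field_simp
  obtain ⟨A, hA⟩ := indep_both F G hG hF hFL hA2W (ε * (1 - |θ|) / (c * c)) (by positivity)
  refine ⟨A, ?_⟩
  filter_upwards [hA] with x hx
  calc _ ≤ c * c * (W.prod W).real (bothSet A x) := hPP _
    _ ≤ c * c * (ε * (1 - |θ|) / (c * c) * W.real (Ioi x)) := by gcongr
    _ = ε * ((1 - |θ|) * W.real (Ioi x)) := by field_simp
    _ ≤ _ := by gcongr; exact hlow x

end sstep


section final_step

lemma equiv_iff_ratio (f g : ℝ → ℝ) (c : ℝ) (hc : 0 < c) (hg : ∀ x, 0 < g x) :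
    (f ~[atTop] fun x => c * g x) ↔ Tendsto (fun x => f x / g x) atTop (nhds c) := by
  rw [isEquivalent_iff_tendsto_one (Eventually.of_forall fun x => (mul_pos hc (hg x)).ne')]
  constructor
  · intro h
    have h2 := h.const_mul c
    rw [mul_one] at h2
    refine h2.congr fun x => ?_
    have := (hg x).ne'
    simp only [Pi.div_apply]
    field_simp
  · intro h
    have h2 := h.const_mul c⁻¹
    rw [inv_mul_cancel₀ hc.ne'] at h2
    refine h2.congr fun x => ?_
    have := (hg x).ne'
    simp only [Pi.div_apply]
    field_simp

lemma Ioi_null (G : Measure ℝ) [IsFiniteMeasure G] (a : ℝ) (h : ∀ y > a, G.real (Ioi y) = 0) : G (Ioi a) = 0 := by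
  have : Ioi a = ⋃ n : ℕ, Ioi (a + 1 / ((n : ℝ) + 1)) := by
    ext z
    simp only [mem_Ioi, mem_iUnion]
    constructor
    · intro hz
      obtain ⟨n, hn⟩ := exists_nat_one_div_lt (sub_pos.2 hz)
      exact ⟨n, by linarith⟩
    · rintro ⟨n, hn⟩
      have : 0 < 1 / ((n : ℝ) + 1) := by positivity
      linarith
  rw [this, measure_iUnion_null_iff]
  intro n
  have := h (a + 1 / ((n : ℝ) + 1)) (by
    have : 0 < 1 / ((n : ℝ) + 1) := by positivity
    linarith)
  rwa [measureReal_eq_zero_iff] at this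

variable {Ω : Type*} [MeasureSpace Ω] [IsProbabilityMeasure (ℙ : Measure Ω)]

lemma exists_y0 (Y : Ω → ℝ) (hYm : Measurable Y) (hY0 : ∀ ω, 0 ≤ Y ω) (hYnd : ℙ {ω | Y ω = 0} ≠ 1) :
    ∃ y0 > 0, 0 < (Measure.map Y ℙ).real (Ioi y0) := by
  have := Measure.isProbabilityMeasure_map (μ := (ℙ : Measure Ω)) hYm.aemeasurable
  by_contra hc
  push Not at hc
  have h := Ioi_null (Measure.map Y ℙ) 0 (fun y hy => le_antisymm (hc y hy) measureReal_nonneg)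
  rw [Measure.map_apply hYm measurableSet_Ioi] at h
  apply hYnd
  have h2 : ({ω | Y ω = 0} : Set Ω) = (Y ⁻¹' Ioi 0)ᶜ := by
    ext ω
    simp only [mem_ofPred_eq, mem_compl_iff, mem_preimage, mem_Ioi, not_lt]
    exact ⟨fun h => h.le, fun h => le_antisymm h (hY0 ω)⟩
  rw [h2]
  exact (prob_compl_eq_one_iff (hYm measurableSet_Ioi)).2 h

end final_step

theorem product_memS_of_fgm {Ω : Type*} [MeasureSpace Ω] [IsProbabilityMeasure (ℙ : Measure Ω)]
    (X Y : Ω → ℝ) (hXm : Measurable X) (hYm : Measurable Y)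
    (hYnonneg : ∀ ω, 0 ≤ Y ω)
    (hFunb : UnboundedDist X)
    (hXnd : ℙ {ω | X ω = 0} ≠ 1) (hYnd : ℙ {ω | Y ω = 0} ≠ 1)
    (θ : ℝ) (hθ : |θ| < 1) (hFGM : FGM X Y θ) (hA2 : Assumption2 X Y)
    (γ : ℝ) (hγ : 0 ≤ γ) (hFS : MemSGamma X γ) :
    MemSGamma (fun ω => X ω * Y ω) (gammaOverBeta Y γ) := by
  have hZm : Measurable (fun ω => X ω * Y ω) := hXm.mul hYm
  have iF := Measure.isProbabilityMeasure_map (μ := (ℙ : Measure Ω)) hXm.aemeasurable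
  have iG := Measure.isProbabilityMeasure_map (μ := (ℙ : Measure Ω)) hYm.aemeasurable
  have iH := Measure.isProbabilityMeasure_map (μ := (ℙ : Measure Ω)) hZm.aemeasurable
  have tX : ∀ x, rvTail X x = (Measure.map X ℙ).real (Ioi x) := rvTail_eq X hXm
  have tY : ∀ x, rvTail Y x = (Measure.map Y ℙ).real (Ioi x) := rvTail_eq Y hYm
  have tZ : ∀ x, rvTail (fun ω => X ω * Y ω) x = (Measure.map (fun ω => X ω * Y ω) ℙ).real (Ioi x) := rvTail_eq _ hZm
  have hJ : Measure.map (fun ω => (X ω, Y ω)) ℙ = fgmLaw (Measure.map X ℙ) (Measure.map Y ℙ) θ :=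
    fgm_joint X Y hXm hYm θ hθ hFGM
  have hHJ : Measure.map (fun ω => X ω * Y ω) ℙ
      = (fgmLaw (Measure.map X ℙ) (Measure.map Y ℙ) θ).map (fun p => p.1 * p.2) := by
    rw [← hJ, Measure.map_map mul_meas (hXm.prodMk hYm)]; rfl
  have hG0 : ∀ᵐ y ∂(Measure.map Y ℙ), 0 ≤ y :=
    (ae_map_iff hYm.aemeasurable measurableSet_Ici).2 (Eventually.of_forall hYnonneg)
  obtain ⟨y0, hy0, hGy0⟩ := exists_y0 Y hYm hYnonneg hYnd
  obtain ⟨⟨-, hFL⟩, hFI, hFC⟩ := hFS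
  have hIexpX : Integrable (fun ω => Real.exp (γ * X ω)) ℙ := by
    have := (integrable_map_measure hFI.1 hXm.aemeasurable).1 hFI
    exact this
  -- tails as measures
  have hFL' : ∀ t > 0, (fun x => (Measure.map X ℙ).real (Ioi (x - t))) ~[atTop]
      (fun x => Real.exp (γ * t) * (Measure.map X ℙ).real (Ioi x)) := by
    intro t ht
    have := hFL t ht
    simpa only [tX] using this
  have hposF : ∀ x, 0 < (Measure.map X ℙ).real (Ioi x) := by
    intro x
    have h1 := hFunb (max x 1) (by positivity)
    rw [tX] at h1
    exact h1.trans_le (real_tail_anti _ (le_max_left _ _))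
  have hFC' : (fun x => ((Measure.map X ℙ).conv (Measure.map X ℙ)).real (Ioi x)) ~[atTop]
      (fun x => (2 * ∫ y, Real.exp (γ * y) ∂(Measure.map X ℙ)) * (Measure.map X ℙ).real (Ioi x)) := by
    have : (fun x => convSqTail X x) = fun x => ((Measure.map X ℙ).conv (Measure.map X ℙ)).real (Ioi x) := rfl
    rw [this] at hFC
    simpa only [tX] using hFC
  have hA2' : ∀ b > 0, ∀ ε > 0, ∀ᶠ x in atTop, (Measure.map Y ℙ).real (Ioi (b * x))
      ≤ ε * (Measure.map (fun ω => X ω * Y ω) ℙ).real (Ioi x) := by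
    intro b hb ε hε
    have := (isLittleO_iff.1 (hA2 b hb)) hε
    filter_upwards [this] with x hx
    rw [tY, tZ, Real.norm_of_nonneg measureReal_nonneg, Real.norm_of_nonneg measureReal_nonneg] at hx
    exact hx
  have hβ : (∃ β, 0 < β ∧ (∀ᵐ y ∂(Measure.map Y ℙ), y ≤ β) ∧ (∀ y < β, 0 < (Measure.map Y ℙ).real (Ioi y))
      ∧ gammaOverBeta Y γ = γ / β) ∨
      ((∀ y, 0 < (Measure.map Y ℙ).real (Ioi y)) ∧ gammaOverBeta Y γ = 0) := by
    by_cases hb : BddAbove {y : ℝ | 0 < rvTail Y y}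
    · left
      have mem0 : y0 ∈ {y : ℝ | 0 < rvTail Y y} := by rw [mem_ofPred_eq, tY]; exact hGy0
      refine ⟨sSup {y : ℝ | 0 < rvTail Y y}, hy0.trans_le (le_csSup hb mem0), ?_, ?_, ?_⟩
      · have := Ioi_null (Measure.map Y ℙ) (sSup {y : ℝ | 0 < rvTail Y y}) (fun y hy => by
          by_contra hc
          have : y ∈ {y : ℝ | 0 < rvTail Y y} := by
            rw [mem_ofPred_eq, tY]; exact lt_of_le_of_ne measureReal_nonneg (Ne.symm hc)
          exact absurd (le_csSup hb this) (not_le.2 hy))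
        rw [ae_iff]
        convert this using 2
        ext z; simp
      · intro y hy
        obtain ⟨s, hs, hys⟩ := exists_lt_of_lt_csSup ⟨y0, mem0⟩ hy
        rw [mem_ofPred_eq, tY] at hs
        exact hs.trans_le (real_tail_anti _ hys.le)
      · unfold gammaOverBeta; rw [if_pos hb]
    · right
      refine ⟨fun y => ?_, by unfold gammaOverBeta; rw [if_neg hb]⟩
      obtain ⟨s, hs, hys⟩ := not_bddAbove_iff.1 hb y
      rw [mem_ofPred_eq, tY] at hs
      exact hs.trans_le (real_tail_anti _ hys.le)
  set γ' := gammaOverBeta Y γ with hγ'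
  clear_value γ'
  have hIH : Integrable (fun y => Real.exp (γ' * y)) (Measure.map (fun ω => X ω * Y ω) ℙ) := by
    have hcont : Measurable (fun y : ℝ => Real.exp (γ' * y)) := by fun_prop
    rw [integrable_map_measure hcont.aestronglyMeasurable hZm.aemeasurable]
    rcases hβ with ⟨β, hβ0, hβ1, -, e⟩ | ⟨-, e⟩
    · have hYβ : ∀ᵐ ω, Y ω ≤ β := ae_of_ae_map hYm.aemeasurable hβ1
      refine Integrable.mono' ((integrable_const (1:ℝ)).add hIexpX) (hcont.comp hZm).aestronglyMeasurable ?_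
      filter_upwards [hYβ] with ω hω
      simp only [Function.comp_apply, Pi.add_apply]
      rw [Real.norm_of_nonneg (Real.exp_pos _).le, e]
      have q0 : 0 ≤ Y ω / β := div_nonneg (hYnonneg ω) hβ0.le
      have q1 : Y ω / β ≤ 1 := (div_le_one hβ0).2 hω
      have e2 : γ / β * (X ω * Y ω) = (γ * X ω) * (Y ω / β) := by ring
      rw [e2]
      rcases le_total 0 (γ * X ω) with h | h
      · have : Real.exp (γ * X ω * (Y ω / β)) ≤ Real.exp (γ * X ω) :=
          Real.exp_le_exp.2 (mul_le_of_le_one_right h q1)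
        linarith
      · have : Real.exp (γ * X ω * (Y ω / β)) ≤ 1 :=
          Real.exp_le_one_iff.2 (mul_nonpos_of_nonpos_of_nonneg h q0)
        linarith [Real.exp_pos (γ * X ω)]
    · have : ((fun y => Real.exp (γ' * y)) ∘ fun ω => X ω * Y ω) = fun _ => 1 := by
        funext ω; simp [e]
      rw [this]
      exact integrable_const _
  -- abstract the laws
  generalize hHdef : Measure.map (fun ω => X ω * Y ω) ℙ = H at *
  generalize hFdef : Measure.map X ℙ = F at *
  generalize hGdef : Measure.map Y ℙ = G at *
  have hHm : ∀ x, H.real (Ioi x) = (fgmLaw F G θ).real (mulSet x) := by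
    intro x
    rw [hHJ, map_measureReal_apply mul_meas measurableSet_Ioi]; rfl
  have hrF := ratio_all (fun x => F.real (Ioi x)) γ hposF hFL'
  have hcF : 0 < ∫ y, Real.exp (γ * y) ∂F := integral_exp_pos hFI
  have hSF := (equiv_iff_ratio _ _ _ (by positivity) hposF).1 hFC'
  have hbF := both_of_conv F γ hposF hrF hFI hSF
  have hposH : ∀ x, 0 < H.real (Ioi x) := by
    intro x
    have h1 : 0 < H.real (Ioi (max x 0)) := by
      rw [hHm]
      refine lt_of_lt_of_le ?_ (H_lower F G θ hθ (max x 0) y0 (le_max_right _ _) hy0)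
      have : 0 < 1 - |θ| := by linarith
      have := hposF (max x 0 / y0)
      positivity
    exact h1.trans_le (real_tail_anti _ (le_max_left _ _))
  have hLH : ∀ t > 0, (fun x => H.real (Ioi (x - t))) ~[atTop] (fun x => Real.exp (γ' * t) * H.real (Ioi x)) := by
    intro t ht
    rw [equiv_iff_ratio _ _ _ (Real.exp_pos _) hposH]
    simp only [hHm]
    have hA2J : ∀ b > 0, ∀ ε > 0, ∀ᶠ x in atTop, G.real (Ioi (b * x)) ≤ ε * (fgmLaw F G θ).real (mulSet x) := by
      simpa only [hHm] using hA2'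
    refine L_lim F G θ hθ hG0 γ hγ hposF hrF y0 hy0 hGy0 hA2J t γ' ht ?_ ?_ ?_
    · intro h
      rcases hβ with ⟨β, -, -, -, e⟩ | ⟨-, e⟩
      · rw [e, h, zero_div]
      · exact e
    · rcases hβ with ⟨β, b0, -, b2, e⟩ | ⟨b2, e⟩
      · rw [e]; exact approx_bdd G γ β t b0 b2
      · rw [e]; exact approx_unb G γ t b2
    · rcases hβ with ⟨β, b0, b1, -, e⟩ | ⟨b2, e⟩
      · rw [e]; exact low_bdd F G γ β t ht hposF hrF b1
      · rw [e]; exact low_unb F G t ht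
  have hrH := ratio_all (fun x => H.real (Ioi x)) γ' hposH hLH
  have hbH := fgm_both F G θ hθ H hHJ hG0 hbF (fun a => by
    refine ⟨Real.exp (γ * a) + 1, by positivity, ?_⟩
    filter_upwards [(hrF a).eventually_le_const (lt_add_one _)] with u hu
    rwa [div_le_iff₀ (hposF u)] at hu) hA2'
  have hSH := conv_of_both H γ' hposH hrH hIH hbH
  have hcH : 0 < ∫ y, Real.exp (γ' * y) ∂H := integral_exp_pos hIH
  refine ⟨⟨fun x _ => ?_, fun t ht => ?_⟩, ?_, ?_⟩
  · rw [tZ]; exact hposH x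
  · simpa only [tZ] using hLH t ht
  · rw [hHdef]; exact hIH
  · have e : (fun x => convSqTail (fun ω => X ω * Y ω) x) = fun x => (H.conv H).real (Ioi x) := by
      rw [← hHdef]; rfl
    rw [e, hHdef]
    simp only [tZ]
    exact (equiv_iff_ratio _ _ _ (by positivity) hposH).2 hSH
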